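/- Central limit theorem for lifetime sums: fix integers 0 ≤ q < d. Assume P is a stationary product probability measure on Ω = [0,1]^{K^d}. Then there exists a constant τ² ≥ 0, depending on d and q, such that as n → ∞: (i) |Λ_n|^{−1} E[(L_q^n − E[L_q^n])²] → τ², and (ii) |Λ_n|^{−1/2} (L_q^n − E[L_q^n]) converges in distribution to the Gaussian law N(0,τ²). -/

import Mathlib

open MeasureTheory Filter Topology

noncomputable section

/-- An elementary cube in `ℝ^d`: the `i`-th component is the elementary interval
`[l, l+1]` if the Boolean is `true` (nondegenerate) and `[l, l]` if `false` (degenerate). -/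
abbrev ElemCube (d : ℕ) := Fin d → ℤ × Bool

/-- The dimension of an elementary cube: the number of nondegenerate components. -/
def cubeDim {d : ℕ} (Q : ElemCube d) : ℕ :=
  (Finset.univ.filter fun i => (Q i).2 = true).card

/-- The geometric realization of an elementary cube as a subset of `ℝ^d`. -/
def cubeSet {d : ℕ} (Q : ElemCube d) : Set (Fin d → ℝ) :=
  {x | ∀ i, x i ∈ Set.Icc ((Q i).1 : ℝ) ((Q i).1 + (if (Q i).2 then 1 else 0))}

/-- A cubical set is a union of elementary cubes. -/
def IsCubical {d : ℕ} (X : Set (Fin d → ℝ)) : Prop :=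
  ∃ S : Set (ElemCube d), X = ⋃ Q ∈ S, cubeSet Q

/-- The free `ℤ`-module generated by all elementary cubes of `ℝ^d` (all dimensions mixed). -/
abbrev CubChain (d : ℕ) := ElemCube d →₀ ℤ

/-- The cubical boundary of a single elementary cube, defined by induction on the ambient
dimension, following the inductive definition: in `ℝ¹`, `∂ [l,l+1]^ = [l+1]^ - [l]^` and
`∂ Q̂ = 0` for degenerate `Q`; and for `Q = I × P`,
`∂ Q̂ = (∂ Î) ⋄ P̂ + (-1)^(dim I) Î ⋄ (∂ P̂)`, where `⋄` is the cubical product. -/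
def boundaryCube : (d : ℕ) → ElemCube d → CubChain d
  | 0, _ => 0
  | d + 1, Q =>
      (if (Q 0).2 then
          Finsupp.single (Fin.cons ((Q 0).1 + 1, false) (fun i => Q i.succ)) (1 : ℤ)
            - Finsupp.single (Fin.cons ((Q 0).1, false) (fun i => Q i.succ)) (1 : ℤ)
        else 0)
      + (if (Q 0).2 then (-1 : ℤ) else 1) •
          (boundaryCube d (fun i => Q i.succ)).sum
            (fun R n => Finsupp.single (Fin.cons (Q 0) R) n)

/-- The cubical boundary operator, the `ℤ`-linear extension of `boundaryCube`. -/
def boundaryHom (d : ℕ) : CubChain d →ₗ[ℤ] CubChain d :=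
  Finsupp.lsum ℤ fun Q => LinearMap.toSpanSingleton ℤ (CubChain d) (boundaryCube d Q)

/-- `C_k^d(X)`: the submodule of chains supported on the `k`-dimensional elementary cubes
contained in `X`. -/
def chainsOn (d k : ℕ) (X : Set (Fin d → ℝ)) : Submodule ℤ (CubChain d) :=
  Finsupp.supported ℤ ℤ {Q : ElemCube d | cubeDim Q = k ∧ cubeSet Q ⊆ X}

/-- `Z_q(X) = ker ∂_q^X`, the cycles of the cubical set `X` in degree `q`. -/
def cycleMod (d q : ℕ) (X : Set (Fin d → ℝ)) : Submodule ℤ (CubChain d) :=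
  chainsOn d q X ⊓ LinearMap.ker (boundaryHom d)

/-- `B_q(X) = im ∂_{q+1}^X`, the boundaries of the cubical set `X` in degree `q`. -/
def boundaryMod (d q : ℕ) (X : Set (Fin d → ℝ)) : Submodule ℤ (CubChain d) :=
  Submodule.map (boundaryHom d) (chainsOn d (q + 1) X)

/-- The `q`-th Betti number of a cubical set: the rank of the free part of the `q`-th
cubical homology `H_q(X) = Z_q(X) / B_q(X)`. -/
def betti (d q : ℕ) (X : Set (Fin d → ℝ)) : ℕ :=
  Module.finrank ℤ
    (↥(cycleMod d q X) ⧸ (boundaryMod d q X).comap (cycleMod d q X).subtype)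

/-- `Λ_n = [-n, n]^d ⊆ ℝ^d`. -/
def lambda (d n : ℕ) : Set (Fin d → ℝ) := {x | ∀ i, x i ∈ Set.Icc (-(n : ℝ)) n}

/-- The configuration space `Ω = [0,1]^{K^d}` with the product σ-field. -/
abbrev Config (d : ℕ) := ElemCube d → unitInterval

/-- Translation of an elementary cube by `x ∈ ℤ^d`. -/
def translateCube {d : ℕ} (x : Fin d → ℤ) (Q : ElemCube d) : ElemCube d :=
  fun i => ((Q i).1 + x i, (Q i).2)

/-- The translation action `τ_x` on configurations: `(τ_x ω)_Q = ω_{-x+Q}`. -/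
def configShift {d : ℕ} (x : Fin d → ℤ) (ω : Config d) : Config d :=
  fun Q => ω (translateCube (-x) Q)

/-- Stationarity of a measure on configuration space: `P(τ_x⁻¹ A) = P(A)`. -/
def Stationary {d : ℕ} (P : Measure (Config d)) : Prop :=
  ∀ (x : Fin d → ℤ) (A : Set (Config d)), MeasurableSet A → P (configShift x ⁻¹' A) = P A

/-- Ergodicity of a measure on configuration space under translations. -/
def ErgodicConfig {d : ℕ} (P : Measure (Config d)) : Prop :=
  ∀ A : Set (Config d), MeasurableSet A →
    (∀ x : Fin d → ℤ, configShift x ⁻¹' A = A) → P A = 0 ∨ P A = 1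

/-- The random cubical set `X(t) = ⋃ {Q ∈ K^d : ω_Q ≤ t}`. -/
def cubSet {d : ℕ} (ω : Config d) (t : ℝ) : Set (Fin d → ℝ) :=
  ⋃ Q ∈ {Q : ElemCube d | (ω Q : ℝ) ≤ t}, cubeSet Q

/-- `β_q^n(t)(ω) = β_q(X(t) ∩ Λ_n)`. -/
def bettiN (d q n : ℕ) (t : ℝ) (ω : Config d) : ℕ :=
  betti d q (cubSet ω t ∩ lambda d n)

/-- `β̂_q(t) := limsup_{n → ∞} |Λ_n|⁻¹ E[β_q^n(t)]`, where `|Λ_n| = (2n)^d`. -/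
def betaHat (d q : ℕ) (P : Measure (Config d)) (t : ℝ) : ℝ :=
  limsup (fun n : ℕ => ((2 * (n : ℝ)) ^ d)⁻¹ * ∫ ω, (bettiN d q n t ω : ℝ) ∂P) atTop

/-- The lifetime sum `L_q^n = ∫_0^1 β_q^n(t) dt`. -/
def lifetimeSum (d q n : ℕ) (ω : Config d) : ℝ :=
  ∫ t in (0 : ℝ)..1, (bettiN d q n t ω : ℝ)



/-! ### Part 1: the boundary operator and the rank formula for Betti numbers -/

/-- Prepend an elementary interval to every cube of a chain. -/
def consL {d : ℕ} (I : ℤ × Bool) : CubChain d →ₗ[ℤ] CubChain (d + 1) :=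
  Finsupp.lmapDomain ℤ ℤ (fun R : ElemCube d => (Fin.cons I R : ElemCube (d + 1)))

lemma consL_single {d : ℕ} (I : ℤ × Bool) (R : ElemCube d) (a : ℤ) :
    consL I (Finsupp.single R a) = Finsupp.single (Fin.cons I R : ElemCube (d + 1)) a := by
  simp [consL]

lemma boundaryHom_single {d : ℕ} (Q : ElemCube d) (a : ℤ) :
    boundaryHom d (Finsupp.single Q a) = a • boundaryCube d Q := by
  simp [boundaryHom]

lemma boundaryCube_cons {d : ℕ} (I : ℤ × Bool) (R : ElemCube d) :
    boundaryCube (d + 1) (Fin.cons I R : ElemCube (d + 1)) =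
      (if I.2 then consL (I.1 + 1, false) (Finsupp.single R 1)
          - consL (I.1, false) (Finsupp.single R 1) else 0)
      + (if I.2 then (-1 : ℤ) else 1) • consL I (boundaryCube d R) := by
  simp only [boundaryCube, Fin.cons_zero, Fin.cons_succ, consL_single]
  congr 2

lemma boundaryHom_consL {d : ℕ} (I : ℤ × Bool) (c : CubChain d) :
    boundaryHom (d + 1) (consL I c) =
      (if I.2 then consL (I.1 + 1, false) c - consL (I.1, false) c else 0)
      + (if I.2 then (-1 : ℤ) else 1) • consL I (boundaryHom d c) := by
  induction c using Finsupp.induction_linear with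
  | zero => simp
  | add f g hf hg =>
    simp only [map_add, hf, hg]
    split_ifs <;> simp <;> abel
  | single R a =>
    rw [consL_single, boundaryHom_single, boundaryHom_single, boundaryCube_cons]
    have h (J : ℤ × Bool) : consL J (Finsupp.single R a) = a • consL J (Finsupp.single R 1) := by
      rw [← map_smul]; simp
    rw [h, h]
    split_ifs <;> simp [smul_sub]

lemma boundaryHom_boundaryCube : ∀ (d : ℕ) (Q : ElemCube d),
    boundaryHom d (boundaryCube d Q) = 0
  | 0, Q => by simp [boundaryCube]
  | d + 1, Q => by
    obtain ⟨I, R, rfl⟩ : ∃ I R, Q = (Fin.cons I R : ElemCube (d + 1)) :=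
      ⟨Q 0, Fin.tail Q, (Fin.cons_self_tail Q).symm⟩
    rw [boundaryCube_cons]
    have ih := boundaryHom_boundaryCube d R
    rcases I with ⟨l, b⟩
    cases b
    · simp [boundaryHom_consL, ih]
    · simp [boundaryHom_consL, boundaryHom_single, ih]

lemma boundaryHom_boundaryHom {d : ℕ} (c : CubChain d) :
    boundaryHom d (boundaryHom d c) = 0 := by
  induction c using Finsupp.induction_linear with
  | zero => simp
  | add f g hf hg => simp [hf, hg]
  | single R a => simp [boundaryHom_single, boundaryHom_boundaryCube]

lemma cubeDim_cons {d : ℕ} (I : ℤ × Bool) (R : ElemCube d) :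
    cubeDim (Fin.cons I R : ElemCube (d + 1)) = (if I.2 then 1 else 0) + cubeDim R := by
  simp only [cubeDim, Finset.card_filter, Fin.sum_univ_succ, Fin.cons_zero, Fin.cons_succ]

/-- Combinatorial face relation. -/
def faceRel {d : ℕ} (R Q : ElemCube d) : Prop :=
  ∀ i, (Q i).1 ≤ (R i).1 ∧
    (R i).1 + (if (R i).2 then 1 else 0) ≤ (Q i).1 + (if (Q i).2 then 1 else 0)

lemma faceRel.refl {d : ℕ} (Q : ElemCube d) : faceRel Q Q := fun _ => ⟨le_rfl, le_rfl⟩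

lemma faceRel.cubeSet_subset {d : ℕ} {R Q : ElemCube d} (h : faceRel R Q) :
    cubeSet R ⊆ cubeSet Q := by
  intro x hx i
  have h1 := hx i
  obtain ⟨h2, h3⟩ := h i
  have h2' : ((Q i).1 : ℝ) ≤ (R i).1 := by exact_mod_cast h2
  have h3' : ((R i).1 : ℝ) + (if (R i).2 then 1 else 0) ≤ (Q i).1 + (if (Q i).2 then 1 else 0) := by
    exact_mod_cast h3
  exact ⟨h2'.trans h1.1, h1.2.trans h3'⟩

lemma faceRel_cons {d : ℕ} {I J : ℤ × Bool} {R Q : ElemCube d} :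
    faceRel (Fin.cons I R : ElemCube (d + 1)) (Fin.cons J Q : ElemCube (d + 1)) ↔
      (J.1 ≤ I.1 ∧ I.1 + (if I.2 then 1 else 0) ≤ J.1 + (if J.2 then 1 else 0)) ∧ faceRel R Q := by
  simp only [faceRel, Fin.forall_fin_succ, Fin.cons_zero, Fin.cons_succ]

lemma mem_supported_consL {d : ℕ} {I : ℤ × Bool} {c : CubChain d} {s : Set (ElemCube d)}
    {t : Set (ElemCube (d + 1))} (hc : c ∈ Finsupp.supported ℤ ℤ s)
    (h : ∀ R ∈ s, (Fin.cons I R : ElemCube (d + 1)) ∈ t) :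
    consL I c ∈ Finsupp.supported ℤ ℤ t := by
  classical
  rw [Finsupp.mem_supported] at hc ⊢
  intro R hR
  have := Finsupp.mapDomain_support hR
  rw [Finset.mem_image] at this
  obtain ⟨R', hR', rfl⟩ := this
  exact h _ (hc hR')

lemma boundaryCube_mem : ∀ (d : ℕ) (Q : ElemCube d),
    boundaryCube d Q ∈ Finsupp.supported ℤ ℤ {R | cubeDim R + 1 = cubeDim Q ∧ faceRel R Q}
  | 0, Q => by simp [boundaryCube]
  | d + 1, Q => by
    obtain ⟨I, R, rfl⟩ : ∃ I R, Q = (Fin.cons I R : ElemCube (d + 1)) :=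
      ⟨Q 0, Fin.tail Q, (Fin.cons_self_tail Q).symm⟩
    rw [boundaryCube_cons]
    have ih := boundaryCube_mem d R
    refine Submodule.add_mem _ ?_ (Submodule.smul_mem _ _ (mem_supported_consL ih ?_))
    · split_ifs with hI
      · refine Submodule.sub_mem _ ?_ ?_
        all_goals
          rw [consL_single]
          apply Finsupp.single_mem_supported
          simp [cubeDim_cons, faceRel_cons, hI, faceRel.refl, add_comm]
      · simp
    · rintro R' ⟨h1, h2⟩
      simp only [Set.mem_setOf_eq, cubeDim_cons, faceRel_cons, le_refl, true_and, h2, and_true]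
      omega

lemma boundaryMod_le_cycleMod (d q : ℕ) (X : Set (Fin d → ℝ)) :
    boundaryMod d q X ≤ cycleMod d q X := by
  rintro _ ⟨c, hc, rfl⟩
  refine ⟨?_, boundaryHom_boundaryHom c⟩
  have hc' : c ∈ Finsupp.supported ℤ ℤ {Q : ElemCube d | cubeDim Q = q + 1 ∧ cubeSet Q ⊆ X} := hc
  rw [Finsupp.supported_eq_span_single] at hc'
  have : Submodule.span ℤ ((fun i : ElemCube d => (Finsupp.single i (1 : ℤ))) ''
      {Q : ElemCube d | cubeDim Q = q + 1 ∧ cubeSet Q ⊆ X}) ≤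
      (chainsOn d q X).comap (boundaryHom d) := by
    rw [Submodule.span_le]
    rintro _ ⟨Q, ⟨hQ1, hQ2⟩, rfl⟩
    simp only [Submodule.comap_coe, Set.mem_preimage, boundaryHom_single, one_smul]
    refine Finsupp.supported_mono ?_ (boundaryCube_mem d Q)
    rintro R ⟨h1, h2⟩
    exact ⟨by omega, h2.cubeSet_subset.trans hQ2⟩
  exact this hc'

/-- The boundary module of a finite set of cubes. -/
def bdMod {d : ℕ} (S : Finset (ElemCube d)) : Submodule ℤ (CubChain d) :=
  Submodule.map (boundaryHom d) (Finsupp.supported ℤ ℤ (S : Set (ElemCube d)))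

/-- Rank of the boundary operator restricted to chains on `S`. -/
def bdRank {d : ℕ} (S : Finset (ElemCube d)) : ℕ := Module.finrank ℤ (bdMod S)

instance supported_finite {d : ℕ} (S : Finset (ElemCube d)) :
    Module.Finite ℤ (Finsupp.supported ℤ ℤ (S : Set (ElemCube d))) :=
  Module.Finite.equiv (Finsupp.supportedEquivFinsupp (M := ℤ) (R := ℤ) (S : Set (ElemCube d))).symm

instance bdMod_finite {d : ℕ} (S : Finset (ElemCube d)) : Module.Finite ℤ (bdMod S) := by
  unfold bdMod; infer_instance

lemma finrank_supported {d : ℕ} (S : Finset (ElemCube d)) :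
    Module.finrank ℤ (Finsupp.supported ℤ ℤ (S : Set (ElemCube d))) = S.card := by
  rw [(Finsupp.supportedEquivFinsupp (M := ℤ) (R := ℤ) (S : Set (ElemCube d))).finrank_eq]
  simp

/-- Rank-nullity for a submodule of chains. -/
lemma finrank_inf_ker {d : ℕ} (N : Submodule ℤ (CubChain d)) [Module.Finite ℤ N] :
    Module.finrank ℤ ↥(N ⊓ LinearMap.ker (boundaryHom d)) +
      Module.finrank ℤ ↥(N.map (boundaryHom d)) = Module.finrank ℤ N := by
  have h := Submodule.finrank_quotient_add_finrank
    (LinearMap.ker ((boundaryHom d).domRestrict N))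
  rw [(LinearMap.quotKerEquivRange ((boundaryHom d).domRestrict N)).finrank_eq] at h
  have h1 : LinearMap.range ((boundaryHom d).domRestrict N) = N.map (boundaryHom d) := by
    rw [LinearMap.range_domRestrict]
  have h2 : Module.finrank ℤ (LinearMap.ker ((boundaryHom d).domRestrict N)) =
      Module.finrank ℤ ↥(N ⊓ LinearMap.ker (boundaryHom d)) := by
    have e : LinearMap.ker ((boundaryHom d).domRestrict N) =
        (N ⊓ LinearMap.ker (boundaryHom d)).comap N.subtype := by
      ext x; simp [LinearMap.domRestrict_apply]
    rw [e]
    exact (Submodule.comapSubtypeEquivOfLe inf_le_left).finrank_eq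
  rw [h1, h2] at h
  omega

lemma betti_eq {d q : ℕ} {X : Set (Fin d → ℝ)} {K : Finset (ElemCube d)}
    (hK : ∀ Q, Q ∈ K ↔ cubeSet Q ⊆ X) :
    (betti d q X : ℝ) = ((K.filter fun Q => cubeDim Q = q).card : ℝ)
      - bdRank (K.filter fun Q => cubeDim Q = q)
      - bdRank (K.filter fun Q => cubeDim Q = q + 1) := by
  have hch (k : ℕ) : chainsOn d k X = Finsupp.supported ℤ ℤ
      ((K.filter fun Q => cubeDim Q = k : Finset (ElemCube d)) : Set (ElemCube d)) := by
    unfold chainsOn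
    congr 1
    ext Q
    simp [hK, and_comm]
  have hfin (k : ℕ) : Module.Finite ℤ (chainsOn d k X) := by rw [hch]; infer_instance
  have hZ := finrank_inf_ker (chainsOn d q X)
  have hZfin : Module.Finite ℤ (cycleMod d q X) :=
    Module.Finite.of_injective (Submodule.inclusion (inf_le_left : _ ≤ chainsOn d q X))
      (Submodule.inclusion_injective _)
  have h := Submodule.finrank_quotient_add_finrank
    ((boundaryMod d q X).comap (cycleMod d q X).subtype)
  rw [(Submodule.comapSubtypeEquivOfLe (boundaryMod_le_cycleMod d q X)).finrank_eq] at h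
  change betti d q X + _ = _ at h
  have e1 : Module.finrank ℤ (boundaryMod d q X) =
      bdRank (K.filter fun Q => cubeDim Q = q + 1) := by
    unfold boundaryMod bdRank bdMod; rw [hch]
  have e2 : Module.finrank ℤ ((chainsOn d q X).map (boundaryHom d)) =
      bdRank (K.filter fun Q => cubeDim Q = q) := by
    unfold bdRank bdMod; rw [hch]
  have e3 : Module.finrank ℤ (chainsOn d q X) = (K.filter fun Q => cubeDim Q = q).card := by
    rw [hch, finrank_supported]
  rw [e2, e3] at hZ
  rw [e1] at h
  change Module.finrank ℤ (cycleMod d q X) + _ = _ at hZ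
  have : betti d q X + bdRank (K.filter fun Q => cubeDim Q = q + 1) +
    bdRank (K.filter fun Q => cubeDim Q = q) = (K.filter fun Q => cubeDim Q = q).card := by omega
  have := congrArg (Nat.cast : ℕ → ℝ) this
  push_cast at this
  linarith

open Classical in
/-- Monotone submodular translation invariant set functions with unit increments. -/
structure Nice {d : ℕ} (g : Finset (ElemCube d) → ℝ) : Prop where
  mono : ∀ S A, g S ≤ g (S ∪ A)
  bdd : ∀ S A, g (S ∪ A) ≤ g S + A.card
  submod : ∀ S T A, S ⊆ T → g (T ∪ A) + g S ≤ g (S ∪ A) + g T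
  trans : ∀ x S, g (S.image (translateCube x)) = g S

lemma cubeDim_translate {d : ℕ} (x : Fin d → ℤ) (Q : ElemCube d) :
    cubeDim (translateCube x Q) = cubeDim Q := rfl

lemma translate_injective {d : ℕ} (x : Fin d → ℤ) :
    Function.Injective (translateCube x : ElemCube d → ElemCube d) := by
  intro Q R h
  funext i
  have := congrFun h i
  simp only [translateCube, Prod.mk.injEq] at this
  exact Prod.ext (by omega) this.2

open Classical in
lemma filter_image_translate {d : ℕ} (x : Fin d → ℤ) (k : ℕ) (S : Finset (ElemCube d)) :
    ((S.image (translateCube x)).filter fun Q => cubeDim Q = k) =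
      (S.filter fun Q => cubeDim Q = k).image (translateCube x) := by
  rw [Finset.filter_image]; rfl

lemma nice_card {d : ℕ} (k : ℕ) :
    Nice (d := d) (fun S => ((S.filter fun Q => cubeDim Q = k).card : ℝ)) := by
  classical
  refine ⟨fun S A => ?_, fun S A => ?_, fun S T A h => ?_, fun x S => ?_⟩
  · exact_mod_cast Finset.card_le_card (Finset.filter_subset_filter _ Finset.subset_union_left)
  · norm_cast
    rw [Finset.filter_union]
    exact (Finset.card_union_le _ _).trans
      (Nat.add_le_add_left (Finset.card_le_card (Finset.filter_subset _ _)) _)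
  · norm_cast
    simp only [Finset.filter_union]
    have h1 := Finset.card_union_add_card_inter (T.filter fun Q => cubeDim Q = k)
      (A.filter fun Q => cubeDim Q = k)
    have h2 := Finset.card_union_add_card_inter (S.filter fun Q => cubeDim Q = k)
      (A.filter fun Q => cubeDim Q = k)
    have h3 := Finset.card_le_card (Finset.inter_subset_inter_right
      (u := A.filter fun Q => cubeDim Q = k) (Finset.filter_subset_filter (fun Q => cubeDim Q = k) h))
    omega
  · norm_cast
    rw [filter_image_translate, Finset.card_image_of_injective _ (translate_injective x)]

open Classical in
lemma bdMod_union {d : ℕ} (S T : Finset (ElemCube d)) : bdMod (S ∪ T) = bdMod S ⊔ bdMod T := by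
  unfold bdMod
  rw [Finset.coe_union, Finsupp.supported_union, Submodule.map_sup]

lemma bdMod_mono {d : ℕ} {S T : Finset (ElemCube d)} (h : S ⊆ T) : bdMod S ≤ bdMod T :=
  Submodule.map_mono (Finsupp.supported_mono (by exact_mod_cast h))

instance inf_finite {d : ℕ} (S T : Finset (ElemCube d)) :
    Module.Finite ℤ ↥(bdMod S ⊓ bdMod T) :=
  Module.Finite.of_injective (Submodule.inclusion (inf_le_left : _ ≤ bdMod S))
      (Submodule.inclusion_injective _)

open Classical in
lemma bdRank_union {d : ℕ} (S T : Finset (ElemCube d)) :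
    bdRank (S ∪ T) + Module.finrank ℤ ↥(bdMod S ⊓ bdMod T) = bdRank S + bdRank T := by
  have h := Submodule.rank_sup_add_rank_inf_eq (R := ℤ) (bdMod S) (bdMod T)
  have hf : Module.Finite ℤ ↥(bdMod S ⊔ bdMod T) := by rw [← bdMod_union]; infer_instance
  unfold bdRank
  rw [bdMod_union]
  rw [← Module.finrank_eq_rank, ← Module.finrank_eq_rank, ← Module.finrank_eq_rank,
    ← Module.finrank_eq_rank] at h
  exact_mod_cast h

lemma bdRank_le_card {d : ℕ} (S : Finset (ElemCube d)) : bdRank S ≤ S.card := by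
  rw [← finrank_supported]
  exact Submodule.finrank_map_le _ _

/-- Translation of chains. -/
def transL {d : ℕ} (x : Fin d → ℤ) : CubChain d →ₗ[ℤ] CubChain d :=
  Finsupp.lmapDomain ℤ ℤ (translateCube x)

lemma transL_single {d : ℕ} (x : Fin d → ℤ) (R : ElemCube d) (a : ℤ) :
    transL x (Finsupp.single R a) = Finsupp.single (translateCube x R) a := by
  simp [transL]

lemma translateCube_cons {d : ℕ} (x : Fin (d + 1) → ℤ) (I : ℤ × Bool) (R : ElemCube d) :
    translateCube x (Fin.cons I R : ElemCube (d + 1)) =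
      (Fin.cons (I.1 + x 0, I.2) (translateCube (Fin.tail x) R) : ElemCube (d + 1)) := by
  funext i
  refine Fin.cases ?_ (fun i => ?_) i
  · simp [translateCube]
  · simp [translateCube, Fin.tail]

lemma transL_consL {d : ℕ} (x : Fin (d + 1) → ℤ) (I : ℤ × Bool) (c : CubChain d) :
    transL x (consL I c) = consL (I.1 + x 0, I.2) (transL (Fin.tail x) c) := by
  induction c using Finsupp.induction_linear with
  | zero => simp
  | add f g hf hg => simp [hf, hg]
  | single R a => rw [consL_single, transL_single, transL_single, consL_single, translateCube_cons]

lemma boundaryCube_translate : ∀ (d : ℕ) (x : Fin d → ℤ) (Q : ElemCube d),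
    boundaryCube d (translateCube x Q) = transL x (boundaryCube d Q)
  | 0, x, Q => by simp [boundaryCube]
  | d + 1, x, Q => by
    obtain ⟨I, R, rfl⟩ : ∃ I R, Q = (Fin.cons I R : ElemCube (d + 1)) :=
      ⟨Q 0, Fin.tail Q, (Fin.cons_self_tail Q).symm⟩
    rw [translateCube_cons, boundaryCube_cons, boundaryCube_cons, boundaryCube_translate d]
    rcases I with ⟨l, b⟩
    cases b
    · simp [transL_consL]
    · simp [transL_consL, transL_single, add_right_comm]

lemma boundaryHom_translate {d : ℕ} (x : Fin d → ℤ) (c : CubChain d) :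
    boundaryHom d (transL x c) = transL x (boundaryHom d c) := by
  induction c using Finsupp.induction_linear with
  | zero => simp
  | add f g hf hg => simp [hf, hg]
  | single R a =>
    rw [transL_single, boundaryHom_single, boundaryHom_single, boundaryCube_translate, map_smul]

open Classical in
lemma bdMod_translate {d : ℕ} (x : Fin d → ℤ) (S : Finset (ElemCube d)) :
    bdMod (S.image (translateCube x)) = (bdMod S).map (transL x) := by
  unfold bdMod
  have h : Finsupp.supported ℤ ℤ ((S.image (translateCube x) : Finset _) : Set (ElemCube d)) =
      (Finsupp.supported ℤ ℤ (S : Set (ElemCube d))).map (transL x) := by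
    rw [Finset.coe_image]
    exact (Finsupp.lmapDomain_supported ℤ ℤ _ _).symm
  rw [h, ← Submodule.map_comp, ← Submodule.map_comp]
  congr 1
  ext1 c
  ext1
  simp [boundaryHom_translate]

open Classical in
lemma bdRank_translate {d : ℕ} (x : Fin d → ℤ) (S : Finset (ElemCube d)) :
    bdRank (S.image (translateCube x)) = bdRank S := by
  unfold bdRank
  rw [bdMod_translate]
  exact (Submodule.equivMapOfInjective _
    (Finsupp.mapDomain_injective (translate_injective x)) _).finrank_eq.symm

lemma nice_rank {d : ℕ} (k : ℕ) :
    Nice (d := d) (fun S => (bdRank (S.filter fun Q => cubeDim Q = k) : ℝ)) := by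
  classical
  refine ⟨fun S A => ?_, fun S A => ?_, fun S T A h => ?_, fun x S => ?_⟩
  · norm_cast
    exact Submodule.finrank_mono
      (bdMod_mono (Finset.filter_subset_filter _ Finset.subset_union_left))
  · norm_cast
    rw [Finset.filter_union]
    have h1 := bdRank_union (S.filter fun Q => cubeDim Q = k) (A.filter fun Q => cubeDim Q = k)
    have h2 := bdRank_le_card (A.filter fun Q => cubeDim Q = k)
    have h3 := Finset.card_le_card (Finset.filter_subset (fun Q => cubeDim Q = k) A)
    omega
  · norm_cast
    simp only [Finset.filter_union]
    have h1 := bdRank_union (T.filter fun Q => cubeDim Q = k) (A.filter fun Q => cubeDim Q = k)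
    have h2 := bdRank_union (S.filter fun Q => cubeDim Q = k) (A.filter fun Q => cubeDim Q = k)
    have h3 : Module.finrank ℤ ↥(bdMod (S.filter fun Q => cubeDim Q = k) ⊓
        bdMod (A.filter fun Q => cubeDim Q = k)) ≤
        Module.finrank ℤ ↥(bdMod (T.filter fun Q => cubeDim Q = k) ⊓
        bdMod (A.filter fun Q => cubeDim Q = k)) :=
      Submodule.finrank_mono (inf_le_inf_right _
        (bdMod_mono (Finset.filter_subset_filter _ h)))
    omega
  · norm_cast
    rw [filter_image_translate, bdRank_translate]



/-! ### Part 2: windows, the random filtration restricted to windows -/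

/-- Cubes contained in the box of radius `n` around `x`. -/
def box {d : ℕ} (x : Fin d → ℤ) (n : ℕ) : Finset (ElemCube d) :=
  Fintype.piFinset fun i => ((Finset.Icc (x i - n) (x i + n)) ×ˢ Finset.univ).filter
    fun p : ℤ × Bool => p.1 + (if p.2 then 1 else 0) ≤ x i + n

lemma mem_box {d : ℕ} {x : Fin d → ℤ} {n : ℕ} {R : ElemCube d} :
    R ∈ box x n ↔ ∀ i, x i - n ≤ (R i).1 ∧ (R i).1 + (if (R i).2 then 1 else 0) ≤ x i + n := by
  simp only [box, Fintype.mem_piFinset, Finset.mem_filter, Finset.mem_product, Finset.mem_Icc,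
    Finset.mem_univ, and_true]
  refine forall_congr' fun i => ?_
  split_ifs <;> omega

open Classical in
/-- The cubes of the window `V` present at time `t`. -/
def KK {d : ℕ} (V : Finset (ElemCube d)) (ω : Config d) (t : ℝ) : Finset (ElemCube d) :=
  V.filter fun R => ∃ Q, faceRel R Q ∧ (ω Q : ℝ) ≤ t

lemma mem_KK {d : ℕ} {V : Finset (ElemCube d)} {ω : Config d} {t : ℝ} {R : ElemCube d} :
    R ∈ KK V ω t ↔ R ∈ V ∧ ∃ Q, faceRel R Q ∧ (ω Q : ℝ) ≤ t := by
  simp [KK]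

/-- The integrated functional. -/
def FF {d : ℕ} (g : Finset (ElemCube d) → ℝ) (V : Finset (ElemCube d)) (ω : Config d) : ℝ :=
  ∫ t in (0 : ℝ)..1, g (KK V ω t)

/-- The midpoint of an elementary cube. -/
def midpt {d : ℕ} (R : ElemCube d) : Fin d → ℝ :=
  fun i => (R i).1 + (if (R i).2 then 1 else 0) / 2

lemma midpt_mem {d : ℕ} (R : ElemCube d) : midpt R ∈ cubeSet R := by
  intro i
  simp only [midpt, Set.mem_Icc]
  split_ifs <;> constructor <;> linarith

lemma faceRel_of_midpt {d : ℕ} {R Q : ElemCube d} (h : midpt R ∈ cubeSet Q) : faceRel R Q := by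
  intro i
  obtain ⟨h1, h2⟩ := h i
  simp only [midpt] at h1 h2
  have e1 : ((2 * (Q i).1 : ℤ) : ℝ) ≤ ((2 * (R i).1 + (if (R i).2 then 1 else 0) : ℤ) : ℝ) := by
    push_cast; linarith
  have e2 : ((2 * (R i).1 + (if (R i).2 then 1 else 0) : ℤ) : ℝ) ≤
      ((2 * ((Q i).1 + (if (Q i).2 then 1 else 0)) : ℤ) : ℝ) := by
    push_cast; linarith
  have e1' := Int.cast_le.1 e1
  have e2' := Int.cast_le.1 e2
  constructor
  · split_ifs at e1' <;> omega
  · split_ifs at e1' e2' ⊢ <;> omega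

lemma cubeSet_subset_lambda {d n : ℕ} {R : ElemCube d} :
    cubeSet R ⊆ lambda d n ↔ R ∈ box 0 n := by
  rw [mem_box]
  constructor
  · intro h i
    have h1 := (h (a := fun i => ((R i).1 : ℝ)) (fun i => by
      simp only [Set.mem_Icc]; split_ifs <;> constructor <;> linarith)) i
    have h2 := (h (a := fun i => ((R i).1 : ℝ) + (if (R i).2 then 1 else 0)) (fun i => by
      simp only [Set.mem_Icc]; split_ifs <;> constructor <;> linarith)) i
    constructor
    · have := h1.1
      have h3 : ((-(n : ℤ) : ℤ) : ℝ) ≤ (((R i).1 : ℤ) : ℝ) := by push_cast; exact this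
      have := Int.cast_le.1 h3
      simpa using this
    · have := h2.2
      have h3 : (((R i).1 + (if (R i).2 then 1 else 0) : ℤ) : ℝ) ≤ ((n : ℤ) : ℝ) := by
        push_cast; exact this
      have := Int.cast_le.1 h3
      simpa using this
  · intro h x hx i
    obtain ⟨h1, h2⟩ := h i
    have h3 : ((0 - (n : ℤ) : ℤ) : ℝ) ≤ (((R i).1 : ℤ) : ℝ) := Int.cast_le.2 (by simpa using h1)
    have h4 : (((R i).1 + (if (R i).2 then 1 else 0) : ℤ) : ℝ) ≤ ((n : ℤ) : ℝ) :=
      Int.cast_le.2 (by simpa using h2)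
    push_cast at h3 h4
    have h5 := hx i
    exact ⟨by linarith [h5.1], by linarith [h5.2]⟩

lemma mem_KK_iff_subset {d n : ℕ} {ω : Config d} {t : ℝ} (R : ElemCube d) :
    R ∈ KK (box 0 n) ω t ↔ cubeSet R ⊆ cubSet ω t ∩ lambda d n := by
  rw [mem_KK, Set.subset_inter_iff, cubeSet_subset_lambda, and_comm]
  refine and_congr_left fun _ => ?_
  constructor
  · rintro ⟨Q, h1, h2⟩
    exact h1.cubeSet_subset.trans (Set.subset_biUnion_of_mem (u := cubeSet) (x := Q) h2)
  · intro h
    have := h (midpt_mem R)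
    simp only [cubSet, Set.mem_iUnion] at this
    obtain ⟨Q, h1, h2⟩ := this
    exact ⟨Q, faceRel_of_midpt h2, h1⟩

/-- The set function whose integral is the lifetime sum. -/
def gBetti (d q : ℕ) (S : Finset (ElemCube d)) : ℝ :=
  ((S.filter fun Q => cubeDim Q = q).card : ℝ)
      - bdRank (S.filter fun Q => cubeDim Q = q)
      - bdRank (S.filter fun Q => cubeDim Q = q + 1)

lemma lifetimeSum_eq (d q n : ℕ) (ω : Config d) :
    lifetimeSum d q n ω = FF (gBetti d q) (box 0 n) ω := by
  unfold lifetimeSum FF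
  congr 1
  funext t
  exact betti_eq mem_KK_iff_subset

lemma KK_subset {d : ℕ} (V : Finset (ElemCube d)) (ω : Config d) (t : ℝ) : KK V ω t ⊆ V :=
  fun _ h => (mem_KK.1 h).1

/-! #### dependence on coordinates -/

lemma KK_congr {d : ℕ} {V : Finset (ElemCube d)} {ω ω' : Config d} {t : ℝ}
    (h : ∀ R ∈ V, ∀ Q, faceRel R Q → ω Q = ω' Q) : KK V ω t = KK V ω' t := by
  ext R
  rw [mem_KK, mem_KK]
  refine and_congr_right fun hR => exists_congr fun Q => and_congr_right fun hQ => ?_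
  rw [h R hR Q hQ]

lemma FF_congr {d : ℕ} {g : Finset (ElemCube d) → ℝ} {V : Finset (ElemCube d)} {ω ω' : Config d}
    (h : ∀ R ∈ V, ∀ Q, faceRel R Q → ω Q = ω' Q) : FF g V ω = FF g V ω' := by
  unfold FF
  simp_rw [KK_congr h]

/-- The cubes on which the window functional of `box x n` depends. -/
def dom {d : ℕ} (x : Fin d → ℤ) (n : ℕ) : Finset (ElemCube d) :=
  Fintype.piFinset fun i => (Finset.Ico (x i - n - 1) (x i + n + 1)) ×ˢ Finset.univ

lemma mem_dom {d : ℕ} {x : Fin d → ℤ} {n : ℕ} {Q : ElemCube d} :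
    Q ∈ dom x n ↔ ∀ i, x i - n - 1 ≤ (Q i).1 ∧ (Q i).1 < x i + n + 1 := by
  simp only [dom, Fintype.mem_piFinset, Finset.mem_product, Finset.mem_Ico, Finset.mem_univ,
    and_true]

lemma card_dom {d : ℕ} (x : Fin d → ℤ) (n : ℕ) : (dom x n).card = (2 * (2 * n + 2)) ^ d := by
  simp only [dom, Fintype.card_piFinset, Finset.card_product, Int.card_Ico, Finset.card_univ,
    Fintype.card_bool]
  have (i : Fin d) : (x i + ↑n + 1 - (x i - ↑n - 1)).toNat = 2 * n + 2 := by omega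
  simp [this, mul_comm]

lemma mem_dom_of_faceRel {d : ℕ} {x : Fin d → ℤ} {n : ℕ} {R Q : ElemCube d} (hR : R ∈ box x n)
    (h : faceRel R Q) : Q ∈ dom x n := by
  rw [mem_dom]
  rw [mem_box] at hR
  intro i
  have h1 := hR i
  have h2 := h i
  split_ifs at h1 h2 <;> omega

lemma FF_box_congr {d : ℕ} {g : Finset (ElemCube d) → ℝ} {x : Fin d → ℤ} {n : ℕ} {ω ω' : Config d}
    (h : ∀ Q ∈ dom x n, ω Q = ω' Q) : FF g (box x n) ω = FF g (box x n) ω' :=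
  FF_congr fun _ hR Q hQ => h Q (mem_dom_of_faceRel hR hQ)

/-! #### measurability and boundedness -/

lemma measurable_comp_KK {d : ℕ} (g : Finset (ElemCube d) → ℝ) (V : Finset (ElemCube d)) :
    Measurable (fun p : Config d × ℝ => g (KK V p.1 p.2)) := by
  classical
  let φ : Config d × ℝ → (V → Prop) := fun p R => (R : ElemCube d) ∈ KK V p.1 p.2
  have hφ : Measurable φ := by
    refine measurable_pi_lambda _ fun R => ?_
    have : (fun p : Config d × ℝ => φ p R) =
        fun p => ∃ Q, (faceRel (R : ElemCube d) Q ∧ (p.1 Q : ℝ) ≤ p.2) := by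
      funext p
      simp [φ, mem_KK]
    rw [this]
    apply measurable_to_prop
    have : ((fun p : Config d × ℝ => ∃ Q, (faceRel (R : ElemCube d) Q ∧ (p.1 Q : ℝ) ≤ p.2)) ⁻¹'
        {True}) = ⋃ Q ∈ {Q | faceRel (R : ElemCube d) Q}, {p : Config d × ℝ | (p.1 Q : ℝ) ≤ p.2} := by
      ext p; simp
    rw [this]
    refine MeasurableSet.biUnion (Set.to_countable _) fun Q _ => ?_
    refine measurableSet_le ?_ measurable_snd
    exact measurable_subtype_coe.comp ((measurable_pi_apply Q).comp measurable_fst)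
  let ψ : (V → Prop) → ℝ := fun s => g ((Finset.univ.filter fun R : V => s R).image Subtype.val)
  have hψ : Measurable ψ := Measurable.of_discrete
  have : (fun p : Config d × ℝ => g (KK V p.1 p.2)) = ψ ∘ φ := by
    funext p
    simp only [ψ, φ, Function.comp]
    congr 1
    ext R
    simp only [Finset.mem_image, Finset.mem_filter, Finset.mem_univ, true_and, Subtype.exists,
      exists_and_left, exists_prop, exists_eq_right_right]
    exact ⟨fun h => ⟨h, KK_subset _ _ _ h⟩, fun h => h.1⟩
  rw [this]
  exact hψ.comp hφ

lemma exists_bound_KK {d : ℕ} (g : Finset (ElemCube d) → ℝ) (V : Finset (ElemCube d)) :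
    ∃ C : ℝ, 0 ≤ C ∧ ∀ ω t, |g (KK V ω t)| ≤ C := by
  refine ⟨∑ S ∈ V.powerset, |g S|, Finset.sum_nonneg fun _ _ => abs_nonneg _, fun ω t => ?_⟩
  exact Finset.single_le_sum (f := fun S => |g S|) (fun _ _ => abs_nonneg _)
    (Finset.mem_powerset.2 (KK_subset V ω t))

lemma intervalIntegrable_KK {d : ℕ} (g : Finset (ElemCube d) → ℝ) (V : Finset (ElemCube d))
    (ω : Config d) : IntervalIntegrable (fun t => g (KK V ω t)) volume 0 1 := by
  obtain ⟨C, _, hC⟩ := exists_bound_KK g V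
  rw [intervalIntegrable_iff, Set.uIoc_of_le (zero_le_one' ℝ)]
  refine Integrable.mono' (integrable_const C) ?_ (Filter.Eventually.of_forall fun t => hC ω t)
  exact ((measurable_comp_KK g V).comp measurable_prodMk_left).aestronglyMeasurable

lemma measurable_FF {d : ℕ} (g : Finset (ElemCube d) → ℝ) (V : Finset (ElemCube d)) :
    Measurable (FF g V) := by
  unfold FF
  simp_rw [intervalIntegral.integral_of_le (zero_le_one' ℝ)]
  exact ((measurable_comp_KK g V).stronglyMeasurable.integral_prod_right').measurable

lemma exists_bound_FF {d : ℕ} (g : Finset (ElemCube d) → ℝ) (V : Finset (ElemCube d)) :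
    ∃ C : ℝ, 0 ≤ C ∧ ∀ ω, |FF g V ω| ≤ C := by
  obtain ⟨C, h0, hC⟩ := exists_bound_KK g V
  refine ⟨C, h0, fun ω => ?_⟩
  have := intervalIntegral.norm_integral_le_of_norm_le_const (a := 0) (b := 1) (C := C)
    (f := fun t => g (KK V ω t)) (fun t _ => hC ω t)
  simpa [FF] using this

lemma FF_sub {d : ℕ} (g h : Finset (ElemCube d) → ℝ) (V : Finset (ElemCube d)) (ω : Config d) :
    FF (fun S => g S - h S) V ω = FF g V ω - FF h V ω :=
  intervalIntegral.integral_sub (intervalIntegrable_KK g V ω) (intervalIntegrable_KK h V ω)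

/-! #### translations -/

lemma faceRel_translate {d : ℕ} (x : Fin d → ℤ) (R Q : ElemCube d) :
    faceRel (translateCube x R) (translateCube x Q) ↔ faceRel R Q := by
  unfold faceRel translateCube
  refine forall_congr' fun i => ?_
  simp only
  constructor <;> rintro ⟨h1, h2⟩ <;> constructor <;> linarith

lemma translate_neg_translate {d : ℕ} (x : Fin d → ℤ) (R : ElemCube d) :
    translateCube (-x) (translateCube x R) = R := by
  funext i; simp [translateCube]

lemma translate_translate_neg {d : ℕ} (x : Fin d → ℤ) (R : ElemCube d) :
    translateCube x (translateCube (-x) R) = R := by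
  funext i; simp [translateCube]

lemma translate_mem_box {d : ℕ} (x y : Fin d → ℤ) (n : ℕ) (R : ElemCube d) :
    translateCube x R ∈ box (x + y) n ↔ R ∈ box y n := by
  simp only [mem_box]
  refine forall_congr' fun i => ?_
  have e1 : (translateCube x R i).1 = (R i).1 + x i := rfl
  have e2 : (translateCube x R i).2 = (R i).2 := rfl
  rw [e1, e2, Pi.add_apply]
  split_ifs <;> omega

open Classical in
lemma KK_translate {d : ℕ} (x y : Fin d → ℤ) (n : ℕ) (ω : Config d) (t : ℝ) :
    KK (box (x + y) n) ω t = (KK (box y n) (configShift (-x) ω) t).image (translateCube x) := by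
  ext R
  obtain ⟨R, rfl⟩ : ∃ R', R = translateCube x R' := ⟨_, (translate_translate_neg x R).symm⟩
  rw [mem_KK, translate_mem_box, (translate_injective x).mem_finset_image, mem_KK]
  refine and_congr_right fun _ => ?_
  constructor
  · rintro ⟨Q, h1, h2⟩
    refine ⟨translateCube (-x) Q, ?_, ?_⟩
    · rw [← faceRel_translate x, translate_translate_neg]; exact h1
    · simpa [configShift, translate_translate_neg] using h2
  · rintro ⟨Q, h1, h2⟩
    refine ⟨translateCube x Q, (faceRel_translate x _ _).2 h1, ?_⟩
    simpa [configShift] using h2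

open Classical in
lemma FF_translate {d : ℕ} {g : Finset (ElemCube d) → ℝ}
    (hg : ∀ x S, g (S.image (translateCube x)) = g S) (x y : Fin d → ℤ) (n : ℕ) (ω : Config d) :
    FF g (box (x + y) n) ω = FF g (box y n) (configShift (-x) ω) := by
  unfold FF
  simp_rw [KK_translate, hg]

lemma measurable_configShift {d : ℕ} (x : Fin d → ℤ) : Measurable (configShift (d := d) x) :=
  measurable_pi_lambda _ fun _ => measurable_pi_apply _

lemma Stationary.measurePreserving {d : ℕ} {P : Measure (Config d)} (h : Stationary P)
    (x : Fin d → ℤ) : MeasurePreserving (configShift x) P P :=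
  ⟨measurable_configShift x, Measure.ext fun A hA => by
    rw [Measure.map_apply (measurable_configShift x) hA, h x A hA]⟩



/-! ### Part 3: a one-sided Efron-Stein inequality -/

section EfronStein

variable {d : ℕ}

/-- Bounded measurable functions on configuration space. -/
structure BM (F : Config d → ℝ) : Prop where
  meas : Measurable F
  bdd : ∃ C : ℝ, ∀ ω, |F ω| ≤ C

lemma BM.integrable {F : Config d → ℝ} (h : BM F) (P : Measure (Config d)) [IsFiniteMeasure P] :
    Integrable F P := by
  obtain ⟨C, hC⟩ := h.bdd
  exact Integrable.mono' (integrable_const C) h.meas.aestronglyMeasurable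
    (Filter.Eventually.of_forall hC)

lemma BM.sub {F G : Config d → ℝ} (hF : BM F) (hG : BM G) : BM (fun ω => F ω - G ω) := by
  obtain ⟨C, hC⟩ := hF.bdd
  obtain ⟨D, hD⟩ := hG.bdd
  exact ⟨hF.meas.sub hG.meas, C + D, fun ω => (abs_sub _ _).trans (add_le_add (hC ω) (hD ω))⟩

lemma BM.add {F G : Config d → ℝ} (hF : BM F) (hG : BM G) : BM (fun ω => F ω + G ω) := by
  obtain ⟨C, hC⟩ := hF.bdd
  obtain ⟨D, hD⟩ := hG.bdd
  exact ⟨hF.meas.add hG.meas, C + D, fun ω => (abs_add_le _ _).trans (add_le_add (hC ω) (hD ω))⟩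

lemma BM.mul {F G : Config d → ℝ} (hF : BM F) (hG : BM G) : BM (fun ω => F ω * G ω) := by
  obtain ⟨C, hC⟩ := hF.bdd
  obtain ⟨D, hD⟩ := hG.bdd
  refine ⟨hF.meas.mul hG.meas, C * D, fun ω => ?_⟩
  rw [abs_mul]
  exact mul_le_mul (hC ω) (hD ω) (abs_nonneg _) ((abs_nonneg _).trans (hC ω))

lemma BM.sq {F : Config d → ℝ} (hF : BM F) : BM (fun ω => F ω ^ 2) := by
  simpa [pow_two] using hF.mul hF

lemma BM.const (c : ℝ) : BM (fun _ : Config d => c) :=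
  ⟨measurable_const, |c|, fun _ => le_rfl⟩

lemma BM.comp {F : Config d → ℝ} (hF : BM F) {φ : Config d → Config d} (hφ : Measurable φ) :
    BM (fun ω => F (φ ω)) :=
  ⟨hF.meas.comp hφ, hF.bdd.imp fun _ h _ => h _⟩

lemma BM.sum {ι : Type*} (s : Finset ι) {F : ι → Config d → ℝ} (hF : ∀ i ∈ s, BM (F i)) :
    BM (fun ω => ∑ i ∈ s, F i ω) := by
  classical
  induction s using Finset.induction_on with
  | empty => simpa using BM.const 0
  | insert a s ha ih =>
    simp_rw [Finset.sum_insert ha]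
    exact (hF a (by simp)).add (ih fun i hi => hF i (by simp [hi]))

lemma BM_FF (g : Finset (ElemCube d) → ℝ) (V : Finset (ElemCube d)) : BM (FF g V) := by
  obtain ⟨C, _, hC⟩ := exists_bound_FF g V
  exact ⟨measurable_FF g V, C, hC⟩

/-- Set one coordinate to one. -/
def upd (Q : ElemCube d) (ω : Config d) : Config d := Function.update ω Q 1

lemma measurable_upd (Q : ElemCube d) : Measurable (upd Q) :=
  measurable_update_left

/-- Marginal law. -/
def marg (P : Measure (Config d)) (Q : ElemCube d) : Measure unitInterval := P.map (fun ω => ω Q)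

instance (P : Measure (Config d)) [IsProbabilityMeasure P] (Q : ElemCube d) :
    IsProbabilityMeasure (marg P Q) :=
  Measure.isProbabilityMeasure_map (measurable_pi_apply Q).aemeasurable

variable {P : Measure (Config d)} [IsProbabilityMeasure P]

lemma measurable_updPair (Q : ElemCube d) :
    Measurable (fun p : Config d × unitInterval => Function.update p.1 Q p.2) := by
  refine measurable_pi_lambda _ fun R => ?_
  by_cases h : R = Q
  · subst h; simpa using measurable_snd
  · simp only [Function.update_of_ne h]
    exact (measurable_pi_apply R).comp measurable_fst

lemma eq_infinitePi_marg
    (hprod : ProbabilityTheory.iIndepFun (m := fun _ : ElemCube d => inferInstance)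
      (fun (Q : ElemCube d) (ω : Config d) => ω Q) P) :
    P = Measure.infinitePi (marg P) := by
  have := hprod.map_fun_eq_infinitePi_map (fun Q => measurable_pi_apply Q)
  rw [Measure.map_id'] at this
  exact this

lemma measurePreserving_updPair
    (hprod : ProbabilityTheory.iIndepFun (m := fun _ : ElemCube d => inferInstance)
      (fun (Q : ElemCube d) (ω : Config d) => ω Q) P) (Q : ElemCube d) :
    MeasurePreserving (fun p : Config d × unitInterval => Function.update p.1 Q p.2)
      (P.prod (marg P Q)) P := by
  classical
  refine ⟨measurable_updPair Q, ?_⟩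
  have hP := eq_infinitePi_marg hprod
  conv_rhs => rw [hP]
  refine Measure.eq_infinitePi _ fun s t ht => ?_
  rw [Measure.map_apply (measurable_updPair Q) (MeasurableSet.pi s.countable_toSet
    fun i _ => ht i)]
  have hpi (s' : Finset (ElemCube d)) : P ((s' : Set (ElemCube d)).pi t) =
      ∏ i ∈ s', marg P i (t i) := by
    conv_lhs => rw [hP]
    exact Measure.infinitePi_pi _ fun i _ => ht i
  by_cases hQ : Q ∈ s
  · have : ((fun p : Config d × unitInterval => Function.update p.1 Q p.2) ⁻¹'
        ((s : Set (ElemCube d)).pi t)) =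
        (((s.erase Q : Finset _) : Set (ElemCube d)).pi t) ×ˢ (t Q) := by
      ext p
      simp only [Set.mem_preimage, Set.mem_pi, Finset.mem_coe, Set.mem_prod, Finset.mem_erase]
      constructor
      · intro h
        refine ⟨fun i hi => ?_, ?_⟩
        · have := h i hi.2
          rwa [Function.update_of_ne hi.1] at this
        · simpa using h Q hQ
      · rintro ⟨h1, h2⟩ i hi
        by_cases hiQ : i = Q
        · subst hiQ; simpa using h2
        · rw [Function.update_of_ne hiQ]; exact h1 i ⟨hiQ, hi⟩
    rw [this, Measure.prod_prod, hpi, mul_comm]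
    exact Finset.mul_prod_erase s (fun i => marg P i (t i)) hQ
  · have : ((fun p : Config d × unitInterval => Function.update p.1 Q p.2) ⁻¹'
        ((s : Set (ElemCube d)).pi t)) = ((s : Set (ElemCube d)).pi t) ×ˢ Set.univ := by
      ext p
      simp only [Set.mem_preimage, Set.mem_pi, Finset.mem_coe, Set.mem_prod, Set.mem_univ, and_true]
      refine forall_congr' fun i => imp_congr_right fun hi => ?_
      have hne : i ≠ Q := fun h => hQ (h ▸ hi)
      rw [Function.update_of_ne hne]
    rw [this, Measure.prod_prod, hpi]
    simp

/-- Integrate out one coordinate. -/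
def AQ (P : Measure (Config d)) (Q : ElemCube d) (F : Config d → ℝ) (ω : Config d) : ℝ :=
  ∫ s, F (Function.update ω Q s) ∂(marg P Q)

lemma BM.integrable_update {F : Config d → ℝ} (hF : BM F) (Q : ElemCube d) (ω : Config d) :
    Integrable (fun s => F (Function.update ω Q s)) (marg P Q) := by
  obtain ⟨C, hC⟩ := hF.bdd
  exact Integrable.mono' (integrable_const C)
    (hF.meas.comp ((measurable_updPair Q).comp measurable_prodMk_left)).aestronglyMeasurable
    (Filter.Eventually.of_forall fun _ => hC _)

lemma BM.AQ {F : Config d → ℝ} (hF : BM F) (Q : ElemCube d) : BM (AQ P Q F) := by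
  constructor
  · exact ((hF.meas.comp (measurable_updPair Q)).stronglyMeasurable.integral_prod_right').measurable
  · obtain ⟨C, hC⟩ := hF.bdd
    refine ⟨C, fun ω => ?_⟩
    have := norm_integral_le_of_norm_le_const (μ := marg P Q) (C := C)
      (f := fun s => F (Function.update ω Q s)) (Filter.Eventually.of_forall fun _ => hC _)
    simpa [_root_.AQ] using this

lemma integral_AQ
    (hprod : ProbabilityTheory.iIndepFun (m := fun _ : ElemCube d => inferInstance)
      (fun (Q : ElemCube d) (ω : Config d) => ω Q) P) (Q : ElemCube d)
    {F : Config d → ℝ} (hF : BM F) : ∫ ω, AQ P Q F ω ∂P = ∫ ω, F ω ∂P := by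
  have hmp := measurePreserving_updPair hprod Q
  have h1 : ∫ ω, F ω ∂P = ∫ p, F (Function.update p.1 Q p.2) ∂(P.prod (marg P Q)) := by
    conv_lhs => rw [← hmp.map_eq]
    exact integral_map hmp.measurable.aemeasurable hF.meas.aestronglyMeasurable
  rw [h1, integral_prod]
  · rfl
  · exact hmp.integrable_comp_of_integrable (hF.integrable P)

lemma AQ_expand {F : Config d → ℝ} (hF : BM F) (Q : ElemCube d) (c : ℝ) (ω : Config d) :
    AQ P Q (fun ω' => (F ω' - c) ^ 2) ω =
      AQ P Q (fun ω' => F ω' ^ 2) ω - 2 * c * AQ P Q F ω + c ^ 2 := by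
  have e : ∀ s, (F (Function.update ω Q s) - c) ^ 2 = F (Function.update ω Q s) ^ 2
      - 2 * c * F (Function.update ω Q s) + c ^ 2 := fun s => by ring
  simp only [AQ, e]
  have i1 := hF.sq.integrable_update (P := P) Q ω
  have i2 := (hF.integrable_update (P := P) Q ω).const_mul (2 * c)
  have i12 : Integrable (fun s => F (Function.update ω Q s) ^ 2
      - 2 * c * F (Function.update ω Q s)) (marg P Q) := i1.sub i2
  rw [integral_add i12 (integrable_const _), integral_sub i1 i2, integral_const_mul]
  simp

lemma sq_AQ_le {F : Config d → ℝ} (hF : BM F) (Q : ElemCube d) (c : ℝ) (ω : Config d) :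
    AQ P Q (fun ω' => F ω' ^ 2) ω - (AQ P Q F ω) ^ 2 ≤ AQ P Q (fun ω' => (F ω' - c) ^ 2) ω := by
  rw [AQ_expand hF]
  nlinarith [sq_nonneg (AQ P Q F ω - c)]

lemma AQ_sq_integral_le
    (hprod : ProbabilityTheory.iIndepFun (m := fun _ : ElemCube d => inferInstance)
      (fun (Q : ElemCube d) (ω : Config d) => ω Q) P) (Q : ElemCube d)
    {F : Config d → ℝ} (hF : BM F) : ∫ ω, (AQ P Q F ω) ^ 2 ∂P ≤ ∫ ω, F ω ^ 2 ∂P := by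
  rw [← integral_AQ hprod Q hF.sq]
  refine integral_mono ((hF.AQ Q).sq.integrable P) ((hF.sq.AQ Q).integrable P) fun ω => ?_
  have h0 : 0 ≤ AQ P Q (fun ω' => (F ω' - AQ P Q F ω) ^ 2) ω :=
    integral_nonneg fun s => sq_nonneg _
  rw [AQ_expand hF] at h0
  simp only
  nlinarith

lemma pyth_AQ
    (hprod : ProbabilityTheory.iIndepFun (m := fun _ : ElemCube d => inferInstance)
      (fun (Q : ElemCube d) (ω : Config d) => ω Q) P) (Q : ElemCube d)
    {F : Config d → ℝ} (hF : BM F) :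
    ∫ ω, F ω ^ 2 ∂P - ∫ ω, (AQ P Q F ω) ^ 2 ∂P ≤ ∫ ω, (F ω - F (upd Q ω)) ^ 2 ∂P := by
  have hD := (hF.sub (hF.comp (measurable_upd Q))).sq
  rw [← integral_AQ hprod Q hF.sq, ← integral_AQ hprod Q hD,
    ← integral_sub ((hF.sq.AQ Q).integrable P) ((hF.AQ Q).sq.integrable P)]
  refine integral_mono (((hF.sq.AQ Q).sub (hF.AQ Q).sq).integrable P)
    ((hD.AQ Q).integrable P) fun ω => ?_
  have h := sq_AQ_le (P := P) hF Q (F (upd Q ω)) ω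
  have e : AQ P Q (fun ω' => (F ω' - F (upd Q ω')) ^ 2) ω =
      AQ P Q (fun ω' => (F ω' - F (upd Q ω)) ^ 2) ω := by
    simp [AQ, upd]
  rw [e]
  exact h

lemma efronStein
    (hprod : ProbabilityTheory.iIndepFun (m := fun _ : ElemCube d => inferInstance)
      (fun (Q : ElemCube d) (ω : Config d) => ω Q) P) (S : Finset (ElemCube d)) :
    ∀ {F : Config d → ℝ}, BM F → (∀ ω ω', (∀ Q ∈ S, ω Q = ω' Q) → F ω = F ω') →
    ∫ ω, F ω ^ 2 ∂P - (∫ ω, F ω ∂P) ^ 2 ≤ ∑ Q ∈ S, ∫ ω, (F ω - F (upd Q ω)) ^ 2 ∂P := by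
  classical
  induction S using Finset.induction_on with
  | empty =>
    intro F hF hdep
    have : ∀ ω, F ω = F (fun _ => 1) := fun ω => hdep _ _ (by simp)
    simp_rw [this]
    simp
  | insert Q S hQ ih =>
    intro F hF hdep
    have hG := hF.AQ (P := P) Q
    have h1 := ih hG (fun ω ω' h => by
      unfold AQ
      congr 1
      funext s
      refine hdep _ _ fun R hR => ?_
      by_cases hRQ : R = Q
      · subst hRQ; simp
      · rw [Function.update_of_ne hRQ, Function.update_of_ne hRQ]
        exact h R ((Finset.mem_insert.1 hR).resolve_left hRQ))
    have h2 := pyth_AQ hprod Q hF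
    rw [integral_AQ hprod Q hF] at h1
    rw [Finset.sum_insert hQ]
    have h3 : ∑ R ∈ S, ∫ ω, (AQ P Q F ω - AQ P Q F (upd R ω)) ^ 2 ∂P ≤
        ∑ R ∈ S, ∫ ω, (F ω - F (upd R ω)) ^ 2 ∂P := by
      refine Finset.sum_le_sum fun R hR => ?_
      have hRQ : R ≠ Q := fun h => hQ (h ▸ hR)
      have hF' := hF.comp (measurable_upd R)
      have e : ∀ ω, AQ P Q F ω - AQ P Q F (upd R ω) = AQ P Q (fun ω => F ω - F (upd R ω)) ω := by
        intro ω
        unfold AQ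
        rw [integral_sub (hF.integrable_update Q ω) (hF'.integrable_update Q ω)]
        congr 2
        funext s
        unfold upd
        rw [Function.update_comm hRQ]
      simp_rw [e]
      exact AQ_sq_integral_le hprod Q (hF.sub hF')
    linarith

end EfronStein



/-! ### Part 4: block approximation in variance -/

section Blocks

variable {d : ℕ}

/-- Centres of blocks. -/
def blk (m : ℕ) (z : Fin d → ℤ) : Fin d → ℤ := fun i => (2 * m + 2 : ℤ) * z i

/-- Block indices. -/
def Zs (d k : ℕ) : Finset (Fin d → ℤ) := Fintype.piFinset fun _ => Finset.Icc (-(k : ℤ)) k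

/-- Number of blocks in one direction from the origin. -/
def kk (n m : ℕ) : ℕ := (n - m) / (2 * m + 2)

lemma card_Zs (k : ℕ) : (Zs d k).card = (2 * k + 1) ^ d := by
  simp only [Zs, Fintype.card_piFinset, Int.card_Icc]
  have : ((k : ℤ) + 1 - -k).toNat = 2 * k + 1 := by omega
  simp only [this, Finset.prod_const, Finset.card_univ, Fintype.card_fin]

/-- Difference between the functional on the large box and the sum over blocks. -/
def DD (g : Finset (ElemCube d) → ℝ) (n m : ℕ) (ω : Config d) : ℝ :=
  FF g (box 0 n) ω - ∑ z ∈ Zs d (kk n m), FF g (box (blk m z) m) ω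

/-- Effect of deleting the cube `Q`. -/
def dl (g : Finset (ElemCube d) → ℝ) (V : Finset (ElemCube d)) (Q : ElemCube d) (ω : Config d) : ℝ :=
  FF g V ω - FF g V (upd Q ω)

lemma dl_eq_zero {g : Finset (ElemCube d) → ℝ} {x : Fin d → ℤ} {n : ℕ} {Q : ElemCube d}
    (h : Q ∉ dom x n) (ω : Config d) : dl g (box x n) Q ω = 0 := by
  unfold dl
  rw [sub_eq_zero]
  refine FF_box_congr fun R hR => ?_
  have : R ≠ Q := fun e => h (e ▸ hR)
  rw [upd, Function.update_of_ne this]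

lemma BM_dl (g : Finset (ElemCube d) → ℝ) (V : Finset (ElemCube d)) (Q : ElemCube d) :
    BM (dl g V Q) := (BM_FF g V).sub ((BM_FF g V).comp (measurable_upd Q))

open Classical in
/-- The faces of a cube. -/
def faces (Q : ElemCube d) : Finset (ElemCube d) :=
  (Fintype.piFinset fun i => ({(Q i).1, (Q i).1 + 1} : Finset ℤ) ×ˢ (Finset.univ : Finset Bool)).filter
    fun R => faceRel R Q

lemma mem_faces {Q R : ElemCube d} : R ∈ faces Q ↔ faceRel R Q := by
  simp only [faces, Finset.mem_filter, Fintype.mem_piFinset, Finset.mem_product, Finset.mem_insert,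
    Finset.mem_singleton, Finset.mem_univ, and_true, and_iff_right_iff_imp]
  intro h i
  have := h i
  split_ifs at this <;> omega

lemma card_faces_le (Q : ElemCube d) : (faces Q).card ≤ 4 ^ d := by
  classical
  unfold faces
  refine (Finset.card_filter_le _ _).trans ?_
  simp only [Fintype.card_piFinset, Finset.card_product, Finset.card_univ, Fintype.card_bool]
  have (i : Fin d) : ({(Q i).1, (Q i).1 + 1} : Finset ℤ).card = 2 := by
    rw [Finset.card_pair]; omega
  simp [this]

open Classical in
lemma KK_upd_on {V : Finset (ElemCube d)} {Q : ElemCube d} {ω : Config d} {t : ℝ}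
    (h : (ω Q : ℝ) ≤ t) (ht : t < 1) :
    KK V ω t = KK V (upd Q ω) t ∪ (V ∩ faces Q) := by
  ext R
  simp only [mem_KK, Finset.mem_union, Finset.mem_inter, mem_faces]
  constructor
  · rintro ⟨hV, Q', h1, h2⟩
    by_cases hQ : Q' = Q
    · subst hQ; exact Or.inr ⟨hV, h1⟩
    · refine Or.inl ⟨hV, Q', h1, ?_⟩
      rwa [upd, Function.update_of_ne hQ]
  · rintro (⟨hV, Q', h1, h2⟩ | ⟨hV, h1⟩)
    · refine ⟨hV, Q', h1, ?_⟩
      by_cases hQ : Q' = Q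
      · subst hQ; exact h
      · rwa [upd, Function.update_of_ne hQ] at h2
    · exact ⟨hV, Q, h1, h⟩

lemma KK_upd_off {V : Finset (ElemCube d)} {Q : ElemCube d} {ω : Config d} {t : ℝ}
    (h : ¬ ((ω Q : ℝ) ≤ t ∧ t < 1)) : KK V ω t = KK V (upd Q ω) t := by
  ext R
  rw [mem_KK, mem_KK]
  refine and_congr_right fun hR => exists_congr fun Q' => and_congr_right fun hQ => ?_
  by_cases hQ : Q' = Q
  · subst hQ
    have h1 : ((ω Q' : unitInterval) : ℝ) ≤ 1 := (ω Q').2.2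
    simp only [upd, Function.update_self, Set.Icc.coe_one]
    constructor
    · intro h2; by_contra h3; exact h ⟨h2, not_le.1 h3⟩
    · intro h2; linarith
  · rw [upd, Function.update_of_ne hQ]

lemma Nice.delta_nonneg {g : Finset (ElemCube d) → ℝ} (hg : Nice g) (V : Finset (ElemCube d))
    (Q : ElemCube d) (ω : Config d) (t : ℝ) : g (KK V (upd Q ω) t) ≤ g (KK V ω t) := by
  classical
  by_cases h : (ω Q : ℝ) ≤ t ∧ t < 1
  · rw [KK_upd_on h.1 h.2]; exact hg.mono _ _
  · rw [KK_upd_off h]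

lemma Nice.delta_le {g : Finset (ElemCube d) → ℝ} (hg : Nice g) (V : Finset (ElemCube d))
    (Q : ElemCube d) (ω : Config d) (t : ℝ) :
    g (KK V ω t) ≤ g (KK V (upd Q ω) t) + 4 ^ d := by
  classical
  by_cases h : (ω Q : ℝ) ≤ t ∧ t < 1
  · rw [KK_upd_on h.1 h.2]
    refine (hg.bdd _ _).trans ?_
    have h1 : (V ∩ faces Q).card ≤ 4 ^ d :=
      (Finset.card_le_card Finset.inter_subset_right).trans (card_faces_le Q)
    have h2 : ((V ∩ faces Q).card : ℝ) ≤ 4 ^ d := by exact_mod_cast h1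
    linarith
  · rw [KK_upd_off h]
    linarith [show (0 : ℝ) ≤ 4 ^ d by positivity]

lemma Nice.delta_anti {g : Finset (ElemCube d) → ℝ} (hg : Nice g) {V V' : Finset (ElemCube d)}
    {Q : ElemCube d} (hV : V ⊆ V') (hQ : faces Q ⊆ V) (ω : Config d) (t : ℝ) :
    g (KK V' ω t) - g (KK V' (upd Q ω) t) ≤ g (KK V ω t) - g (KK V (upd Q ω) t) := by
  classical
  by_cases h : (ω Q : ℝ) ≤ t ∧ t < 1
  · rw [KK_upd_on (V := V) h.1 h.2, KK_upd_on (V := V') h.1 h.2, Finset.inter_eq_right.2 hQ,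
      Finset.inter_eq_right.2 (hQ.trans hV)]
    have hsub : KK V (upd Q ω) t ⊆ KK V' (upd Q ω) t := fun R hR => by
      rw [mem_KK] at hR ⊢; exact ⟨hV hR.1, hR.2⟩
    have := hg.submod _ _ (faces Q) hsub
    linarith
  · rw [KK_upd_off (V := V) h, KK_upd_off (V := V') h]; simp

lemma dl_eq_integral (g : Finset (ElemCube d) → ℝ) (V : Finset (ElemCube d)) (Q : ElemCube d)
    (ω : Config d) :
    dl g V Q ω = ∫ t in (0 : ℝ)..1, (g (KK V ω t) - g (KK V (upd Q ω) t)) :=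
  (intervalIntegral.integral_sub (intervalIntegrable_KK g V ω)
    (intervalIntegrable_KK g V _)).symm

lemma Nice.dl_nonneg {g : Finset (ElemCube d) → ℝ} (hg : Nice g) (V : Finset (ElemCube d))
    (Q : ElemCube d) (ω : Config d) : 0 ≤ dl g V Q ω := by
  rw [dl_eq_integral]
  exact intervalIntegral.integral_nonneg zero_le_one
    fun t _ => sub_nonneg.2 (hg.delta_nonneg V Q ω t)

lemma Nice.dl_le {g : Finset (ElemCube d) → ℝ} (hg : Nice g) (V : Finset (ElemCube d))
    (Q : ElemCube d) (ω : Config d) : dl g V Q ω ≤ 4 ^ d := by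
  rw [dl_eq_integral]
  have h := intervalIntegral.integral_mono_on (μ := volume) (zero_le_one' ℝ)
    ((intervalIntegrable_KK g V ω).sub (intervalIntegrable_KK g V (upd Q ω)))
    (intervalIntegrable_const (c := (4 : ℝ) ^ d))
    (fun t _ => by have := hg.delta_le V Q ω t; linarith)
  simpa using h

lemma Nice.dl_anti {g : Finset (ElemCube d) → ℝ} (hg : Nice g) {V V' : Finset (ElemCube d)}
    {Q : ElemCube d} (hV : V ⊆ V') (hQ : faces Q ⊆ V) (ω : Config d) :
    dl g V' Q ω ≤ dl g V Q ω := by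
  rw [dl_eq_integral, dl_eq_integral]
  exact intervalIntegral.integral_mono_on (zero_le_one' ℝ)
    ((intervalIntegrable_KK g V' ω).sub (intervalIntegrable_KK g V' (upd Q ω)))
    ((intervalIntegrable_KK g V ω).sub (intervalIntegrable_KK g V (upd Q ω)))
    (fun t _ => hg.delta_anti hV hQ ω t)

/-! #### geometry of boxes -/

lemma box_subset {x y : Fin d → ℤ} {n N : ℕ} (h : ∀ i, |x i - y i| + n ≤ N) :
    box x n ⊆ box y N := by
  intro R hR
  rw [mem_box] at hR ⊢
  intro i
  have h1 := hR i
  have h2 := abs_le.1 (le_sub_iff_add_le.2 (h i))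
  constructor <;> linarith [h1.1, h1.2, h2.1, h2.2]

/-- Position of a cube. -/
def pos (Q : ElemCube d) : Fin d → ℤ := fun i => (Q i).1

lemma faces_subset_box {Q : ElemCube d} {n : ℕ} (hn : 1 ≤ n) : faces Q ⊆ box (pos Q) n := by
  intro R hR
  rw [mem_faces] at hR
  rw [mem_box]
  intro i
  have := hR i
  have e : pos Q i = (Q i).1 := rfl
  rw [e]
  constructor
  · omega
  · split_ifs at this ⊢ <;> omega

lemma dom_blk_unique {m : ℕ} {z z' : Fin d → ℤ} {Q : ElemCube d} (h : Q ∈ dom (blk m z) m)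
    (h' : Q ∈ dom (blk m z') m) : z = z' := by
  rw [mem_dom] at h h'
  funext i
  have h1 := h i
  have h2 := h' i
  simp only [blk] at h1 h2
  have hm : (0 : ℤ) ≤ m := by positivity
  rcases lt_trichotomy (z i) (z' i) with hlt | heq | hgt
  · exfalso; nlinarith [h1.1, h1.2, h2.1, h2.2]
  · exact heq
  · exfalso; nlinarith [h1.1, h1.2, h2.1, h2.2]

lemma blk_bound {n m : ℕ} (hmn : m ≤ n) {z : Fin d → ℤ} (hz : z ∈ Zs d (kk n m)) (i : Fin d) :
    |blk m z i| + m ≤ n := by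
  simp only [Zs, Fintype.mem_piFinset, Finset.mem_Icc] at hz
  have h1 := hz i
  have h2 : kk n m * (2 * m + 2) ≤ n - m := Nat.div_mul_le_self _ _
  have h3 : (kk n m : ℤ) * (2 * m + 2) ≤ n - m := by
    have : ((kk n m * (2 * m + 2) : ℕ) : ℤ) ≤ ((n - m : ℕ) : ℤ) := by exact_mod_cast h2
    rw [Nat.cast_sub hmn] at this
    push_cast at this
    exact this
  have h4 : |blk m z i| ≤ n - m := by
    rw [abs_le]
    simp only [blk]
    have hm : (0 : ℤ) ≤ m := by positivity
    constructor <;> nlinarith [h1.1, h1.2]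
  linarith

lemma box_blk_subset {n m : ℕ} (hmn : m ≤ n) {z : Fin d → ℤ} (hz : z ∈ Zs d (kk n m)) :
    box (blk m z) m ⊆ box 0 n :=
  box_subset fun i => by simpa using blk_bound hmn hz i

lemma dom_blk_subset {n m : ℕ} (hmn : m ≤ n) {z : Fin d → ℤ} (hz : z ∈ Zs d (kk n m)) :
    dom (blk m z) m ⊆ dom 0 n := by
  intro Q hQ
  rw [mem_dom] at hQ ⊢
  intro i
  have h1 := blk_bound hmn hz i
  have h2 := hQ i
  have h3 := abs_le.1 (le_sub_iff_add_le.2 h1)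
  simp only [Pi.zero_apply]
  constructor <;> linarith [h2.1, h2.2, h3.1, h3.2]

/-- Offsets of the well-inside cubes of a block. -/
def innerCubes (d r : ℕ) : Finset (ElemCube d) :=
  Fintype.piFinset fun _ => (Finset.Ico (-(r : ℤ)) r) ×ˢ Finset.univ

lemma card_inner (r : ℕ) : (innerCubes d r).card = (2 * (2 * r)) ^ d := by
  simp only [innerCubes, Fintype.card_piFinset, Finset.card_product, Int.card_Ico, Finset.card_univ,
    Fintype.card_bool]
  have : ((r : ℤ) - -r).toNat = 2 * r := by omega
  simp only [this, Finset.prod_const, Finset.card_univ, Fintype.card_fin]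
  rw [mul_comm]

lemma mem_inner {r : ℕ} {Q : ElemCube d} :
    Q ∈ innerCubes d r ↔ ∀ i, -(r : ℤ) ≤ (Q i).1 ∧ (Q i).1 < r := by
  simp only [innerCubes, Fintype.mem_piFinset, Finset.mem_product, Finset.mem_Ico, Finset.mem_univ,
    and_true]

open Classical in
/-- The good cubes. -/
def goodSet (d n m r : ℕ) : Finset (ElemCube d) :=
  (Zs d (kk n m) ×ˢ innerCubes d r).image fun p => translateCube (blk m p.1) p.2

lemma translate_inner_mem_dom {m r : ℕ} (hr : r ≤ m) {z : Fin d → ℤ} {Q : ElemCube d}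
    (hQ : Q ∈ innerCubes d r) : translateCube (blk m z) Q ∈ dom (blk m z) m := by
  rw [mem_inner] at hQ
  rw [mem_dom]
  intro i
  have := hQ i
  simp only [translateCube]
  constructor <;> linarith [this.1, this.2, show (r : ℤ) ≤ m by exact_mod_cast hr]

lemma card_goodSet {n m r : ℕ} (hr : r ≤ m) :
    (goodSet d n m r).card = ((2 * kk n m + 1) * (2 * (2 * r))) ^ d := by
  classical
  unfold goodSet
  have hinj : Set.InjOn (fun p : (Fin d → ℤ) × ElemCube d => translateCube (blk m p.1) p.2)
      (Zs d (kk n m) ×ˢ innerCubes d r : Finset _) := ?_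
  · rw [Finset.card_image_of_injOn hinj, Finset.card_product, card_Zs, card_inner, ← mul_pow]
  rintro ⟨z, Q⟩ hp ⟨z', Q'⟩ hp' h
  simp only [Finset.coe_product, Set.mem_prod, Finset.mem_coe] at hp hp'
  simp only at h
  have h1 := translate_inner_mem_dom (z := z) hr hp.2
  have h2 := translate_inner_mem_dom (z := z') hr hp'.2
  rw [h] at h1
  obtain rfl := dom_blk_unique h1 h2
  rw [translate_injective _ h]

lemma goodSet_subset {n m r : ℕ} (hr : r ≤ m) (hmn : m ≤ n) : goodSet d n m r ⊆ dom 0 n := by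
  classical
  intro Q hQ
  simp only [goodSet, Finset.mem_image, Finset.mem_product, Prod.exists] at hQ
  obtain ⟨z, R, ⟨hz, hR⟩, rfl⟩ := hQ
  exact dom_blk_subset hmn hz (translate_inner_mem_dom hr hR)

end Blocks



/-! ### Part 5: variance of the block error -/

section VarErr

variable {d : ℕ} {P : Measure (Config d)}

/-- Reference cube at the origin. -/
def qz (b : Fin d → Bool) : ElemCube d := fun i => (0, b i)

lemma translate_pos_qz (Q : ElemCube d) : translateCube (pos Q) (qz fun i => (Q i).2) = Q := by
  funext i; simp [translateCube, pos, qz]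

lemma dl_translate {g : Finset (ElemCube d) → ℝ} (hg : Nice g) (Q : ElemCube d) (n : ℕ)
    (ω : Config d) :
    dl g (box (pos Q) n) Q ω = dl g (box 0 n) (qz fun i => (Q i).2) (configShift (-pos Q) ω) := by
  have h : configShift (-pos Q) (upd Q ω) = upd (qz fun i => (Q i).2) (configShift (-pos Q) ω) := by
    funext R
    simp only [configShift, neg_neg, upd]
    by_cases hR : R = qz fun i => (Q i).2
    · subst hR
      rw [translate_pos_qz]; simp
    · rw [Function.update_of_ne hR, Function.update_of_ne]
      · simp only [configShift, neg_neg]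
      · intro e
        exact hR (translate_injective (pos Q) (e.trans (translate_pos_qz Q).symm))
  have h2 := fun ω => FF_translate hg.trans (pos Q) 0 n ω
  rw [add_zero] at h2
  rw [dl, dl, h2, h2, h]

lemma integral_shift (hstat : Stationary P) {F : Config d → ℝ} (hF : BM F) (x : Fin d → ℤ) :
    ∫ ω, F (configShift x ω) ∂P = ∫ ω, F ω ∂P := by
  have h := (hstat.measurePreserving x)
  conv_rhs => rw [← h.map_eq]
  rw [integral_map h.measurable.aemeasurable hF.meas.aestronglyMeasurable]

lemma integral_dl {g : Finset (ElemCube d) → ℝ} (hg : Nice g) (hstat : Stationary P)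
    (Q : ElemCube d) (n : ℕ) :
    ∫ ω, dl g (box (pos Q) n) Q ω ∂P = ∫ ω, dl g (box 0 n) (qz fun i => (Q i).2) ω ∂P := by
  simp_rw [dl_translate hg]
  exact integral_shift hstat (BM_dl g _ _) _

lemma exists_rho [IsProbabilityMeasure P] {g : Finset (ElemCube d) → ℝ} (hg : Nice g)
    (hstat : Stationary P) {ε : ℝ} (hε : 0 < ε) :
    ∃ ρ : ℕ, 1 ≤ ρ ∧ ∀ (Q : ElemCube d) (N : ℕ), ρ ≤ N →
      ∫ ω, dl g (box (pos Q) ρ) Q ω ∂P - ∫ ω, dl g (box (pos Q) N) Q ω ∂P ≤ ε := by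
  let a : (Fin d → Bool) → ℕ → ℝ := fun b n => ∫ ω, dl g (box 0 (n + 1)) (qz b) ω ∂P
  have hpos : ∀ b : Fin d → Bool, pos (qz b) = 0 := fun b => rfl
  have hanti : ∀ b, Antitone (a b) := by
    intro b n N h
    refine integral_mono ((BM_dl g _ _).integrable P) ((BM_dl g _ _).integrable P) fun ω => ?_
    refine hg.dl_anti (box_subset fun i => ?_) ?_ ω
    · simpa using h
    · have := faces_subset_box (Q := qz b) (n := n + 1) (by omega)
      rwa [hpos] at this
  have hb : ∀ b, BddBelow (Set.range (a b)) := fun b =>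
    ⟨0, by rintro _ ⟨n, rfl⟩; exact integral_nonneg fun ω => hg.dl_nonneg _ _ _⟩
  have hev : ∀ᶠ n in atTop, ∀ b, a b n < (⨅ i, a b i) + ε := by
    rw [eventually_all]
    intro b
    exact (tendsto_atTop_ciInf (hanti b) (hb b)).eventually_lt_const (by linarith)
  obtain ⟨n, hn⟩ := hev.exists
  refine ⟨n + 1, by omega, fun Q N hN => ?_⟩
  rw [integral_dl hg hstat, integral_dl hg hstat]
  obtain ⟨N, rfl⟩ : ∃ k, N = k + 1 := ⟨N - 1, by omega⟩
  have h1 := hn fun i => (Q i).2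
  have h2 := ciInf_le (hb fun i => (Q i).2) N
  simp only [a] at h1 h2
  linarith

lemma DD_sub (g : Finset (ElemCube d) → ℝ) (n m : ℕ) (Q : ElemCube d) (ω : Config d) :
    DD g n m ω - DD g n m (upd Q ω) =
      dl g (box 0 n) Q ω - ∑ z ∈ Zs d (kk n m), dl g (box (blk m z) m) Q ω := by
  simp only [DD, dl, Finset.sum_sub_distrib]
  ring

lemma sum_dl_eq {g : Finset (ElemCube d) → ℝ} {n m : ℕ} {Q : ElemCube d} {z : Fin d → ℤ}
    (hz : z ∈ Zs d (kk n m)) (hQ : Q ∈ dom (blk m z) m) (ω : Config d) :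
    ∑ z ∈ Zs d (kk n m), dl g (box (blk m z) m) Q ω = dl g (box (blk m z) m) Q ω := by
  refine Finset.sum_eq_single_of_mem z hz fun z' _ hne => dl_eq_zero (fun h => hne ?_) ω
  exact dom_blk_unique h hQ

lemma sum_dl_bound {g : Finset (ElemCube d) → ℝ} (hg : Nice g) (n m : ℕ) (Q : ElemCube d)
    (ω : Config d) :
    0 ≤ ∑ z ∈ Zs d (kk n m), dl g (box (blk m z) m) Q ω ∧
      ∑ z ∈ Zs d (kk n m), dl g (box (blk m z) m) Q ω ≤ 4 ^ d := by
  refine ⟨Finset.sum_nonneg fun z _ => hg.dl_nonneg _ _ _, ?_⟩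
  by_cases h : ∃ z ∈ Zs d (kk n m), Q ∈ dom (blk m z) m
  · obtain ⟨z, hz, hQ⟩ := h
    rw [sum_dl_eq hz hQ]
    exact hg.dl_le _ _ _
  · push Not at h
    rw [Finset.sum_eq_zero fun z hz => dl_eq_zero (h z hz) ω]
    positivity

lemma BM_DD (g : Finset (ElemCube d) → ℝ) (n m : ℕ) : BM (DD g n m) :=
  (BM_FF g _).sub (BM.sum _ fun _ _ => BM_FF g _)

lemma bad_bound [IsProbabilityMeasure P] {g : Finset (ElemCube d) → ℝ} (hg : Nice g) (n m : ℕ)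
    (Q : ElemCube d) :
    ∫ ω, (DD g n m ω - DD g n m (upd Q ω)) ^ 2 ∂P ≤ (4 ^ d) ^ 2 := by
  have hB := ((BM_DD g n m).sub ((BM_DD g n m).comp (measurable_upd Q))).sq
  calc _ ≤ ∫ ω, ((4 : ℝ) ^ d) ^ 2 ∂P := by
        refine integral_mono (hB.integrable P) (integrable_const _) fun ω => ?_
        simp only
        rw [DD_sub]
        have h1 := sum_dl_bound hg n m Q ω
        have h2 := hg.dl_nonneg (box 0 n) Q ω
        have h3 := hg.dl_le (box 0 n) Q ω
        apply sq_le_sq'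
        · linarith [h1.1, h1.2]
        · linarith [h1.1, h1.2]
    _ = _ := by simp

lemma good_bound [IsProbabilityMeasure P] {g : Finset (ElemCube d) → ℝ} (hg : Nice g)
    {n m r ρ : ℕ} {ε : ℝ} (hρ : 1 ≤ ρ) (hr : r + ρ ≤ m) (hmn : m ≤ n)
    (hrho : ∀ (Q : ElemCube d) (N : ℕ), ρ ≤ N →
      ∫ ω, dl g (box (pos Q) ρ) Q ω ∂P - ∫ ω, dl g (box (pos Q) N) Q ω ∂P ≤ ε)
    {Q : ElemCube d} (hQ : Q ∈ goodSet d n m r) :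
    ∫ ω, (DD g n m ω - DD g n m (upd Q ω)) ^ 2 ∂P ≤ 4 ^ d * ε := by
  classical
  simp only [goodSet, Finset.mem_image, Finset.mem_product, Prod.exists] at hQ
  obtain ⟨z, R, ⟨hz, hR⟩, hQR⟩ := hQ
  have hQd : Q ∈ dom (blk m z) m := hQR ▸ translate_inner_mem_dom (by omega) hR
  have hpos : ∀ i, pos Q i = (R i).1 + blk m z i := fun i => by rw [← hQR]; rfl
  rw [mem_inner] at hR
  have hs1 : box (pos Q) ρ ⊆ box (blk m z) m := box_subset fun i => by
    rw [hpos, add_sub_cancel_right]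
    have : |(R i).1| ≤ r := abs_le.2 ⟨(hR i).1, (hR i).2.le⟩
    have : (r : ℤ) + ρ ≤ m := by exact_mod_cast hr
    linarith
  have hs2 := box_blk_subset hmn hz
  have hs3 : box 0 n ⊆ box (pos Q) (2 * n) := box_subset fun i => by
    rw [Pi.zero_apply, zero_sub, abs_neg, hpos]
    have h1 : |(R i).1| ≤ r := abs_le.2 ⟨(hR i).1, (hR i).2.le⟩
    have h2 : (r : ℤ) + ρ ≤ m := by exact_mod_cast hr
    have h3 := blk_bound hmn hz i
    have h4 := abs_add_le (R i).1 (blk m z i)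
    push_cast
    linarith
  have hf : faces Q ⊆ box (pos Q) ρ := faces_subset_box hρ
  have hB := ((BM_DD g n m).sub ((BM_DD g n m).comp (measurable_upd Q))).sq
  calc _ ≤ ∫ ω, (4 : ℝ) ^ d * (dl g (box (pos Q) ρ) Q ω - dl g (box (pos Q) (2 * n)) Q ω) ∂P := by
        refine integral_mono (hB.integrable P)
          (((BM.const _).mul ((BM_dl g _ _).sub (BM_dl g _ _))).integrable P) fun ω => ?_
        simp only
        rw [DD_sub, sum_dl_eq hz hQd]
        have h1 := hg.dl_anti hs1 hf ω
        have h2 := hg.dl_anti hs2 (hf.trans hs1) ω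
        have h3 := hg.dl_anti hs3 (hf.trans (hs1.trans hs2)) ω
        have h4 := hg.dl_nonneg (box 0 n) Q ω
        have h5 := hg.dl_le (box (blk m z) m) Q ω
        nlinarith
    _ = 4 ^ d * (∫ ω, dl g (box (pos Q) ρ) Q ω ∂P - ∫ ω, dl g (box (pos Q) (2 * n)) Q ω ∂P) := by
        rw [integral_const_mul, integral_sub ((BM_dl g _ _).integrable P)
          ((BM_dl g _ _).integrable P)]
    _ ≤ _ := by
        have := hrho Q (2 * n) (by omega)
        gcongr

lemma var_bound [IsProbabilityMeasure P] {g : Finset (ElemCube d) → ℝ} (hg : Nice g)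
    (hprod : ProbabilityTheory.iIndepFun (m := fun _ : ElemCube d => inferInstance)
      (fun (Q : ElemCube d) (ω : Config d) => ω Q) P)
    {n m r ρ : ℕ} {ε : ℝ} (hε : 0 ≤ ε) (hρ : 1 ≤ ρ) (hr : r + ρ ≤ m) (hmn : m ≤ n)
    (hrho : ∀ (Q : ElemCube d) (N : ℕ), ρ ≤ N →
      ∫ ω, dl g (box (pos Q) ρ) Q ω ∂P - ∫ ω, dl g (box (pos Q) N) Q ω ∂P ≤ ε) :
    ∫ ω, DD g n m ω ^ 2 ∂P - (∫ ω, DD g n m ω ∂P) ^ 2 ≤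
      ((2 * (2 * n + 2)) ^ d : ℝ) * (4 ^ d * ε) +
      (((2 * (2 * n + 2)) ^ d : ℝ) - (((2 * kk n m + 1) * (2 * (2 * r))) ^ d : ℝ)) * (4 ^ d) ^ 2 := by
  classical
  refine (efronStein hprod (dom 0 n) (BM_DD g n m) ?_).trans ?_
  · intro ω ω' h
    unfold DD
    rw [FF_box_congr h]
    congr 1
    exact Finset.sum_congr rfl fun z hz =>
      FF_box_congr fun Q hQ => h Q (dom_blk_subset hmn hz hQ)
  · have hsub : goodSet d n m r ⊆ dom 0 n := goodSet_subset (by omega) hmn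
    rw [← Finset.sum_sdiff hsub, add_comm]
    have e1 : ((dom (d := d) 0 n).card : ℝ) = ((2 * (2 * n + 2)) ^ d : ℝ) := by
      rw [card_dom]; push_cast; rfl
    have e2 : ((goodSet d n m r).card : ℝ) = (((2 * kk n m + 1) * (2 * (2 * r))) ^ d : ℝ) := by
      rw [card_goodSet (by omega)]; push_cast; rfl
    rw [← e1, ← e2]
    refine add_le_add ?_ ?_
    · refine (Finset.sum_le_card_nsmul _ _ _ fun Q hQ =>
        good_bound hg hρ hr hmn hrho hQ).trans ?_
      rw [nsmul_eq_mul]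
      gcongr
    · refine (Finset.sum_le_card_nsmul _ _ _ fun Q hQ => bad_bound (P := P) hg n m Q).trans ?_
      rw [nsmul_eq_mul, Finset.card_sdiff_of_subset hsub, Nat.cast_sub (Finset.card_le_card hsub)]

lemma tendsto_inv_two_mul : Tendsto (fun n : ℕ => (2 * (n : ℝ))⁻¹) atTop (𝓝 0) :=
  (tendsto_natCast_atTop_atTop.const_mul_atTop (by norm_num : (0 : ℝ) < 2)).inv_tendsto_atTop

lemma kk_bounds {n m : ℕ} (h : m ≤ n) :
    (2 * (n : ℝ) - 4 * m) ≤ (2 * kk n m + 1) * (2 * m + 2) ∧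
      (2 * (kk n m : ℝ) + 1) * (2 * m + 2) ≤ 2 * n + 2 := by
  have h1 : kk n m * (2 * m + 2) ≤ n - m := Nat.div_mul_le_self _ _
  have h2 : n - m < (kk n m + 1) * (2 * m + 2) := Nat.lt_mul_of_div_lt (Nat.lt_succ_self _) (by omega)
  have h1' : kk n m * (2 * m + 2) + m ≤ n := by omega
  have h2' : n < (kk n m + 1) * (2 * m + 2) + m := by omega
  have h3 : (kk n m : ℝ) * (2 * m + 2) + m ≤ n := by exact_mod_cast h1'
  have h4 : (n : ℝ) + 1 ≤ (kk n m + 1) * (2 * m + 2) + m := by exact_mod_cast h2'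
  constructor <;> nlinarith

lemma tendsto_kk (m : ℕ) :
    Tendsto (fun n : ℕ => (2 * (kk n m : ℝ) + 1) * (2 * m + 2) * (2 * (n : ℝ))⁻¹) atTop (𝓝 1) := by
  have h0 := tendsto_inv_two_mul
  have hl : Tendsto (fun n : ℕ => 1 - 4 * (m : ℝ) * (2 * (n : ℝ))⁻¹) atTop (𝓝 1) := by
    simpa using (h0.const_mul (4 * (m : ℝ))).const_sub 1
  have hu : Tendsto (fun n : ℕ => 1 + 2 * (2 * (n : ℝ))⁻¹) atTop (𝓝 1) := by
    simpa using (h0.const_mul (2 : ℝ)).const_add 1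
  refine tendsto_of_tendsto_of_tendsto_of_le_of_le' hl hu ?_ ?_
  · filter_upwards [eventually_ge_atTop m, eventually_gt_atTop 0] with n hn h0
    have hn0 : (0 : ℝ) < 2 * n := by positivity
    have := mul_le_mul_of_nonneg_right (kk_bounds hn).1 (inv_pos.2 hn0).le
    rwa [sub_mul, mul_inv_cancel₀ hn0.ne'] at this
  · filter_upwards [eventually_ge_atTop m, eventually_gt_atTop 0] with n hn h0
    have hn0 : (0 : ℝ) < 2 * n := by positivity
    have := mul_le_mul_of_nonneg_right (kk_bounds hn).2 (inv_pos.2 hn0).le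
    rwa [add_mul (2 * (n : ℝ)), mul_inv_cancel₀ hn0.ne'] at this

/-- Block approximation property. -/
def BlockApprox (P : Measure (Config d)) (g : Finset (ElemCube d) → ℝ) : Prop :=
  ∀ ε : ℝ, 0 < ε → ∃ m0 : ℕ, ∀ m ≥ m0, ∀ᶠ n : ℕ in atTop,
    ∫ ω, DD g n m ω ^ 2 ∂P - (∫ ω, DD g n m ω ∂P) ^ 2 ≤ ε * (2 * (n : ℝ)) ^ d

lemma Nice.blockApprox [IsProbabilityMeasure P] {g : Finset (ElemCube d) → ℝ} (hg : Nice g)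
    (hstat : Stationary P)
    (hprod : ProbabilityTheory.iIndepFun (m := fun _ : ElemCube d => inferInstance)
      (fun (Q : ElemCube d) (ω : Config d) => ω Q) P) : BlockApprox P g := by
  intro ε hε
  have h16 : (0 : ℝ) < 16 ^ d := by positivity
  set δ : ℝ := ε / (2 * 16 ^ d) with hδdef
  have hδ : 0 < δ := by positivity
  obtain ⟨ρ, hρ, hrho⟩ := exists_rho hg hstat hδ
  -- limit in m
  have hm : Tendsto (fun m : ℕ => (4 * ((m : ℝ) - ρ) * (2 * (m : ℝ) + 2)⁻¹) ^ d) atTop (𝓝 (2 ^ d)) := by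
    have h0 := (tendsto_inv_two_mul.comp (tendsto_add_atTop_nat 1))
    have h1 : Tendsto (fun m : ℕ => 2 - 4 * (1 + (ρ : ℝ)) * (2 * ((m + 1 : ℕ) : ℝ))⁻¹)
        atTop (𝓝 2) := by
      simpa using (h0.const_mul (4 * (1 + (ρ : ℝ)))).const_sub 2
    refine (h1.congr fun m => ?_).pow d
    push_cast
    field_simp
    ring
  have hm' := hm.eventually_const_lt (show (2 : ℝ) ^ d - δ < 2 ^ d by linarith)
  obtain ⟨m1, hm1⟩ := eventually_atTop.1 hm'
  refine ⟨max m1 ρ, fun m hmm => ?_⟩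
  have hmρ : ρ ≤ m := (le_max_right _ _).trans hmm
  have hc := hm1 m ((le_max_left _ _).trans hmm)
  have hlim1 : Tendsto (fun n : ℕ => (2 * (2 * (n : ℝ) + 2) * (2 * (n : ℝ))⁻¹) ^ d) atTop
      (𝓝 (2 ^ d)) := by
    have h1 : Tendsto (fun n : ℕ => 2 + 4 * (2 * (n : ℝ))⁻¹) atTop (𝓝 2) := by
      simpa using (tendsto_inv_two_mul.const_mul (4 : ℝ)).const_add 2
    refine (h1.congr' ?_).pow d
    filter_upwards [eventually_gt_atTop 0] with n h0
    have hn0 : (0 : ℝ) < n := by positivity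
    field_simp
    ring
  have hlim2 : Tendsto (fun n : ℕ => ((2 * (kk n m : ℝ) + 1) * (2 * (2 * ((m - ρ : ℕ) : ℝ))) *
      (2 * (n : ℝ))⁻¹) ^ d) atTop (𝓝 ((4 * ((m : ℝ) - ρ) * (2 * (m : ℝ) + 2)⁻¹) ^ d)) := by
    have h1 := (tendsto_kk m).const_mul (4 * ((m : ℝ) - ρ) * (2 * (m : ℝ) + 2)⁻¹)
    rw [mul_one] at h1
    refine (h1.congr fun n => ?_).pow d
    rw [Nat.cast_sub hmρ]
    have : (2 * (m : ℝ) + 2) ≠ 0 := by positivity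
    field_simp
    ring
  have hlim := (hlim1.sub hlim2).eventually_lt_const (show _ < δ by linarith)
  filter_upwards [hlim, eventually_ge_atTop m, eventually_gt_atTop 0] with n hn hmn hn0
  have hn0' : (0 : ℝ) < n := by positivity
  have hpn : (0 : ℝ) < (2 * (n : ℝ)) ^ d := by positivity
  have hb := var_bound hg hprod (r := m - ρ) hδ.le hρ (by omega) hmn hrho
  refine hb.trans ?_
  rw [mul_pow _ (2 * (n : ℝ))⁻¹, mul_pow _ (2 * (n : ℝ))⁻¹, ← sub_mul, inv_pow] at hn
  have hn2 : (2 * (2 * (n : ℝ) + 2)) ^ d - ((2 * (kk n m : ℝ) + 1) * (2 * (2 * ((m - ρ : ℕ) : ℝ)))) ^ d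
      ≤ δ * (2 * (n : ℝ)) ^ d := by
    have := mul_le_mul_of_nonneg_right hn.le hpn.le
    rwa [mul_assoc, inv_mul_cancel₀ hpn.ne', mul_one] at this
  have hn3 : (2 * (2 * (n : ℝ) + 2)) ^ d ≤ 4 ^ d * (2 * (n : ℝ)) ^ d := by
    rw [← mul_pow]
    have : (1 : ℝ) ≤ n := by exact_mod_cast hn0
    exact pow_le_pow_left₀ (by positivity) (by linarith) d
  have e16 : (4 ^ d : ℝ) ^ 2 = 16 ^ d := by rw [← pow_mul, mul_comm, pow_mul]; norm_num
  have e16' : (4 ^ d : ℝ) * 4 ^ d = 16 ^ d := by rw [← mul_pow]; norm_num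
  calc _ ≤ (4 ^ d * (2 * (n : ℝ)) ^ d) * (4 ^ d * δ) + (δ * (2 * (n : ℝ)) ^ d) * (4 ^ d) ^ 2 := by
        gcongr
    _ = (16 ^ d * δ + δ * 16 ^ d) * (2 * (n : ℝ)) ^ d := by rw [e16, ← e16']; ring
    _ = _ := by rw [hδdef]; field_simp; ring

lemma var_eq [IsProbabilityMeasure P] {H : Config d → ℝ} (hH : BM H) :
    ∫ ω, H ω ^ 2 ∂P - (∫ ω, H ω ∂P) ^ 2 = ∫ ω, (H ω - ∫ ω', H ω' ∂P) ^ 2 ∂P := by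
  set c := ∫ ω', H ω' ∂P with hc
  have : ∀ ω, (H ω - c) ^ 2 = H ω ^ 2 - (2 * c) * H ω + c ^ 2 := fun ω => by ring
  simp_rw [this]
  rw [integral_add ((hH.sq.sub ((BM.const _).mul hH)).integrable P) (integrable_const _),
    integral_sub (hH.sq.integrable P) (((BM.const _).mul hH).integrable P), integral_const_mul,
    ← hc]
  simp
  ring

/-- Variance is quasi-subadditive. -/
lemma var_sub_le [IsProbabilityMeasure P] {F G : Config d → ℝ} (hF : BM F) (hG : BM G) :
    ∫ ω, (F ω - G ω) ^ 2 ∂P - (∫ ω, (F ω - G ω) ∂P) ^ 2 ≤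
      2 * (∫ ω, F ω ^ 2 ∂P - (∫ ω, F ω ∂P) ^ 2) + 2 * (∫ ω, G ω ^ 2 ∂P - (∫ ω, G ω ∂P) ^ 2) := by
  rw [var_eq hF, var_eq hG, var_eq (hF.sub hG), integral_sub (hF.integrable P) (hG.integrable P),
    ← integral_const_mul, ← integral_const_mul, ← integral_add]
  · refine integral_mono ?_ ?_ fun ω => ?_
    · exact (((hF.sub hG).sub (BM.const _)).sq).integrable P
    · exact (((BM.const 2).mul (hF.sub (BM.const _)).sq).add
        ((BM.const 2).mul (hG.sub (BM.const _)).sq)).integrable P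
    · simp only
      nlinarith [sq_nonneg ((F ω - ∫ ω', F ω' ∂P) + (G ω - ∫ ω', G ω' ∂P))]
  · exact ((BM.const 2).mul (hF.sub (BM.const _)).sq).integrable P
  · exact ((BM.const 2).mul (hG.sub (BM.const _)).sq).integrable P

lemma BlockApprox.sub [IsProbabilityMeasure P] {g h : Finset (ElemCube d) → ℝ}
    (hg : BlockApprox P g) (hh : BlockApprox P h) : BlockApprox P (fun S => g S - h S) := by
  intro ε hε
  obtain ⟨m1, h1⟩ := hg (ε / 4) (by positivity)
  obtain ⟨m2, h2⟩ := hh (ε / 4) (by positivity)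
  refine ⟨max m1 m2, fun m hm => ?_⟩
  filter_upwards [h1 m ((le_max_left _ _).trans hm), h2 m ((le_max_right _ _).trans hm)]
    with n a1 a2
  have e : DD (fun S => g S - h S) n m = fun ω => DD g n m ω - DD h n m ω := by
    funext ω
    simp only [DD, FF_sub, Finset.sum_sub_distrib]
    ring
  rw [e]
  have := var_sub_le (P := P) (BM_DD g n m) (BM_DD h n m)
  linarith

lemma gBetti_blockApprox [IsProbabilityMeasure P] (q : ℕ) (hstat : Stationary P)
    (hprod : ProbabilityTheory.iIndepFun (m := fun _ : ElemCube d => inferInstance)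
      (fun (Q : ElemCube d) (ω : Config d) => ω Q) P) : BlockApprox P (gBetti d q) :=
  (((nice_card q).blockApprox hstat hprod).sub ((nice_rank q).blockApprox hstat hprod)).sub
    ((nice_rank (q + 1)).blockApprox hstat hprod)

lemma gBetti_trans (q : ℕ) (x : Fin d → ℤ) (S : Finset (ElemCube d)) :
    gBetti d q (S.image (translateCube x)) = gBetti d q S := by
  unfold gBetti
  have h1 := (nice_card (d := d) q).trans x S
  have h2 := (nice_rank (d := d) q).trans x S
  have h3 := (nice_rank (d := d) (q + 1)).trans x S
  rw [h1, h2, h3]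

end VarErr



/-! ### Part 6: `L²` tools, independence of blocks, abstract approximation -/

section Approx

variable {d : ℕ} {P : Measure (Config d)}

lemma cauchySchwarz [IsProbabilityMeasure P] {F G : Config d → ℝ} (hF : BM F) (hG : BM G) :
    (∫ ω, F ω * G ω ∂P) ^ 2 ≤ (∫ ω, F ω ^ 2 ∂P) * ∫ ω, G ω ^ 2 ∂P := by
  have key : ∀ x : ℝ, 0 ≤ (∫ ω, F ω ^ 2 ∂P) * (x * x) + (2 * ∫ ω, F ω * G ω ∂P) * x
      + ∫ ω, G ω ^ 2 ∂P := by
    intro x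
    have h0 : 0 ≤ ∫ ω, (x * F ω + G ω) ^ 2 ∂P := integral_nonneg fun ω => sq_nonneg _
    have e : ∀ ω, (x * F ω + G ω) ^ 2 = (x * x) * F ω ^ 2 + (2 * x) * (F ω * G ω) + G ω ^ 2 :=
      fun ω => by ring
    simp_rw [e] at h0
    rw [integral_add ((((BM.const _).mul hF.sq).add ((BM.const _).mul (hF.mul hG))).integrable P)
      (hG.sq.integrable P), integral_add (((BM.const _).mul hF.sq).integrable P)
      (((BM.const _).mul (hF.mul hG)).integrable P), integral_const_mul, integral_const_mul] at h0
    linarith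
  have := discrim_le_zero key
  rw [discrim] at this
  nlinarith

/-- The `L²` norm. -/
def nrm (P : Measure (Config d)) (F : Config d → ℝ) : ℝ := √(∫ ω, F ω ^ 2 ∂P)

lemma nrm_nonneg (F : Config d → ℝ) : 0 ≤ nrm P F := Real.sqrt_nonneg _

lemma nrm_sq (F : Config d → ℝ) : nrm P F ^ 2 = ∫ ω, F ω ^ 2 ∂P :=
  Real.sq_sqrt (integral_nonneg fun ω => sq_nonneg _)

lemma nrm_add_le [IsProbabilityMeasure P] {F G : Config d → ℝ} (hF : BM F) (hG : BM G) :
    nrm P (fun ω => F ω + G ω) ≤ nrm P F + nrm P G := by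
  have h1 : ∫ ω, F ω * G ω ∂P ≤ nrm P F * nrm P G := by
    refine le_of_sq_le_sq ?_ (mul_nonneg (nrm_nonneg _) (nrm_nonneg _))
    rw [mul_pow, nrm_sq, nrm_sq]
    exact cauchySchwarz hF hG
  refine le_of_sq_le_sq ?_ (add_nonneg (nrm_nonneg _) (nrm_nonneg _))
  have e : ∀ ω, (F ω + G ω) ^ 2 = F ω ^ 2 + 2 * (F ω * G ω) + G ω ^ 2 := fun ω => by ring
  rw [nrm_sq]
  simp_rw [e]
  rw [integral_add ((hF.sq.add ((BM.const _).mul (hF.mul hG))).integrable P)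
    (hG.sq.integrable P), integral_add (hF.sq.integrable P)
    (((BM.const _).mul (hF.mul hG)).integrable P), integral_const_mul, add_sq, nrm_sq, nrm_sq]
  linarith

lemma nrm_sub_comm (F G : Config d → ℝ) :
    nrm P (fun ω => F ω - G ω) = nrm P (fun ω => G ω - F ω) := by
  unfold nrm
  congr 1
  exact integral_congr_ae (Eventually.of_forall fun ω => by simp only; ring)

lemma abs_nrm_sub_le [IsProbabilityMeasure P] {F G : Config d → ℝ} (hF : BM F) (hG : BM G) :
    |nrm P F - nrm P G| ≤ nrm P (fun ω => F ω - G ω) := by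
  have h1 := nrm_add_le (P := P) (hF.sub hG) hG
  have h2 := nrm_add_le (P := P) (hG.sub hF) hF
  rw [nrm_sub_comm] at h2
  simp only [sub_add_cancel] at h1 h2
  rw [abs_le]
  constructor <;> linarith

lemma nrm_const_mul (c : ℝ) (F : Config d → ℝ) :
    nrm P (fun ω => c * F ω) = |c| * nrm P F := by
  unfold nrm
  simp_rw [mul_pow]
  rw [integral_const_mul, Real.sqrt_mul (sq_nonneg _), Real.sqrt_sq_eq_abs]

lemma BM.abs {F : Config d → ℝ} (hF : BM F) : BM (fun ω => |F ω|) := by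
  obtain ⟨hm, C, hC⟩ := hF
  exact ⟨hm.abs, C, fun ω => by simpa using hC ω⟩

lemma integral_abs_le_nrm [IsProbabilityMeasure P] {F : Config d → ℝ} (hF : BM F) :
    ∫ ω, |F ω| ∂P ≤ nrm P F := by
  refine le_of_sq_le_sq ?_ (nrm_nonneg _)
  have := cauchySchwarz (P := P) hF.abs (BM.const 1)
  rw [nrm_sq]
  simpa using this

/-- Characteristic function of a random variable. -/
def cf (P : Measure (Config d)) (F : Config d → ℝ) (u : ℝ) : ℂ :=
  ∫ ω, Complex.exp (u * F ω * Complex.I) ∂P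

lemma BM.integrable_cexp [IsProbabilityMeasure P] {F : Config d → ℝ} (hF : BM F) (u : ℝ) :
    Integrable (fun ω => Complex.exp (u * F ω * Complex.I)) P := by
  refine Integrable.mono' (integrable_const (1 : ℝ)) ?_ (Eventually.of_forall fun ω => ?_)
  · have := hF.meas
    fun_prop
  · rw [← Complex.ofReal_mul, Complex.norm_exp_ofReal_mul_I]

lemma norm_cexp_sub_le (a b : ℝ) :
    ‖Complex.exp (a * Complex.I) - Complex.exp (b * Complex.I)‖ ≤ |a - b| := by
  have e : Complex.exp (a * Complex.I) - Complex.exp (b * Complex.I) =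
      Complex.exp (b * Complex.I) * (Complex.exp (Complex.I * ((a - b : ℝ) : ℂ)) - 1) := by
    rw [mul_sub, ← Complex.exp_add, mul_one]
    congr 2
    push_cast
    ring
  rw [e, norm_mul, Complex.norm_exp_ofReal_mul_I, one_mul]
  exact Real.norm_exp_I_mul_ofReal_sub_one_le

lemma norm_cf_sub_le [IsProbabilityMeasure P] {F G : Config d → ℝ} (hF : BM F) (hG : BM G)
    (u : ℝ) : ‖cf P F u - cf P G u‖ ≤ |u| * nrm P (fun ω => F ω - G ω) := by
  unfold cf
  rw [← integral_sub (hF.integrable_cexp u) (hG.integrable_cexp u)]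
  calc _ ≤ ∫ ω, |u| * |F ω - G ω| ∂P := by
        refine norm_integral_le_of_norm_le (((BM.const _).mul (hF.sub hG).abs).integrable P)
          (Eventually.of_forall fun ω => ?_)
        rw [← Complex.ofReal_mul, ← Complex.ofReal_mul]
        refine (norm_cexp_sub_le _ _).trans ?_
        rw [← mul_sub, abs_mul]
    _ ≤ _ := by
        rw [integral_const_mul]
        exact mul_le_mul_of_nonneg_left (integral_abs_le_nrm (hF.sub hG)) (abs_nonneg _)

/-- Abstract approximation lemma. -/
lemma approx_limit [IsProbabilityMeasure P] {Z : ℕ → Config d → ℝ} {T : ℕ → ℕ → Config d → ℝ}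
    {σ : ℕ → ℝ} (hZ : ∀ n, BM (Z n)) (hT : ∀ m n, BM (T m n)) (hσ : ∀ m, 0 ≤ σ m)
    (hA : ∀ ε : ℝ, 0 < ε → ∃ m, ∀ᶠ n in atTop, nrm P (fun ω => Z n ω - T m n ω) ≤ ε)
    (hB : ∀ m n, nrm P (T m n) = σ m)
    (hC : ∀ m u, Tendsto (fun n => cf P (T m n) u) atTop
      (𝓝 (Complex.exp (((-(σ m ^ 2 * u ^ 2 / 2) : ℝ) : ℂ))))) :
    ∃ τ : ℝ, 0 ≤ τ ∧ Tendsto (fun n => nrm P (Z n)) atTop (𝓝 τ) ∧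
      ∀ u, Tendsto (fun n => cf P (Z n) u) atTop
        (𝓝 (Complex.exp (((-(τ ^ 2 * u ^ 2 / 2) : ℝ) : ℂ)))) := by
  have hx : ∀ ε : ℝ, 0 < ε → ∃ m, (∀ᶠ n in atTop, |nrm P (Z n) - σ m| ≤ ε) ∧
      ∀ᶠ n in atTop, nrm P (fun ω => Z n ω - T m n ω) ≤ ε := by
    intro ε hε
    obtain ⟨m, hm⟩ := hA ε hε
    refine ⟨m, ?_, hm⟩
    filter_upwards [hm] with n hn
    have := abs_nrm_sub_le (P := P) (hZ n) (hT m n)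
    rw [hB] at this
    exact this.trans hn
  have hcau : CauchySeq (fun n => nrm P (Z n)) := by
    rw [Metric.cauchySeq_iff']
    intro ε hε
    obtain ⟨m, hm, -⟩ := hx (ε / 3) (by positivity)
    obtain ⟨N, hN⟩ := eventually_atTop.1 hm
    refine ⟨N, fun n hn => ?_⟩
    rw [Real.dist_eq]
    have h1 := abs_le.1 (hN n hn)
    have h2 := abs_le.1 (hN N le_rfl)
    rw [abs_lt]
    constructor <;> linarith [h1.1, h1.2, h2.1, h2.2]
  obtain ⟨τ, hτ⟩ := cauchySeq_tendsto_of_complete hcau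
  refine ⟨τ, ge_of_tendsto' hτ fun n => nrm_nonneg _, hτ, fun u => ?_⟩
  rw [Metric.tendsto_atTop']
  intro η hη
  have hcont : Continuous fun s : ℝ => Complex.exp (((-(s ^ 2 * u ^ 2 / 2) : ℝ) : ℂ)) := by
    fun_prop
  obtain ⟨δ, hδ, hδc⟩ := Metric.continuous_iff.1 hcont τ (η / 3) (by positivity)
  set ε := min (δ / 2) (η / (3 * (|u| + 1))) with hε
  have hε0 : 0 < ε := by positivity
  obtain ⟨m, hm1, hm2⟩ := hx ε hε0
  have hστ : |τ - σ m| ≤ ε := le_of_tendsto ((hτ.sub_const (σ m)).abs) hm1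
  have h3 : dist (σ m) τ < δ := by
    rw [Real.dist_eq, abs_sub_comm]
    have : ε ≤ δ / 2 := min_le_left _ _
    linarith
  have h4 := hδc (σ m) h3
  have h5 := (Metric.tendsto_nhds.1 (hC m u)) (η / 3) (by positivity)
  obtain ⟨N, hN⟩ := eventually_atTop.1 (hm2.and h5)
  refine ⟨N, fun n hn => ?_⟩
  obtain ⟨h6, h7⟩ := hN n hn.le
  have h8 : dist (cf P (Z n) u) (cf P (T m n) u) ≤ η / 3 := by
    rw [dist_eq_norm]
    refine (norm_cf_sub_le (hZ n) (hT m n) u).trans ?_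
    have h9 : ε ≤ η / (3 * (|u| + 1)) := min_le_right _ _
    calc |u| * nrm P (fun ω => Z n ω - T m n ω) ≤ (|u| + 1) * (η / (3 * (|u| + 1))) := by
          refine mul_le_mul (by linarith) (h6.trans h9) (nrm_nonneg _) (by positivity)
      _ = η / 3 := by field_simp
  calc _ ≤ dist (cf P (Z n) u) (cf P (T m n) u) + dist (cf P (T m n) u)
        (Complex.exp (((-(σ m ^ 2 * u ^ 2 / 2) : ℝ) : ℂ))) + dist (Complex.exp
        (((-(σ m ^ 2 * u ^ 2 / 2) : ℝ) : ℂ))) (Complex.exp (((-(τ ^ 2 * u ^ 2 / 2) : ℝ) : ℂ))) :=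
        dist_triangle4 _ _ _ _
    _ < η / 3 + η / 3 + η / 3 := by linarith
    _ = η := by ring

/-! #### independence -/

open Classical in
/-- Extend a partial configuration by `1`. -/
def extendCfg (S : Finset (ElemCube d)) (x : S → unitInterval) : Config d :=
  fun Q => if h : Q ∈ S then x ⟨Q, h⟩ else 1

lemma measurable_extendCfg (S : Finset (ElemCube d)) : Measurable (extendCfg S) := by
  classical
  refine measurable_pi_lambda _ fun Q => ?_
  unfold extendCfg
  by_cases h : Q ∈ S
  · simp only [h, dif_pos]; exact measurable_pi_apply _
  · simp only [h, dif_neg, not_false_iff]; exact measurable_const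

lemma indepFun_of_dep {β γ : Type*} [MeasurableSpace β] [MeasurableSpace γ]
    (hprod : ProbabilityTheory.iIndepFun (m := fun _ : ElemCube d => inferInstance)
      (fun (Q : ElemCube d) (ω : Config d) => ω Q) P)
    {S T : Finset (ElemCube d)} (hST : Disjoint S T) {F : Config d → β} {G : Config d → γ}
    (hF : Measurable F) (hG : Measurable G)
    (hFS : ∀ ω ω', (∀ Q ∈ S, ω Q = ω' Q) → F ω = F ω')
    (hGT : ∀ ω ω', (∀ Q ∈ T, ω Q = ω' Q) → G ω = G ω') :
    ProbabilityTheory.IndepFun F G P := by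
  have h := hprod.indepFun_finset S T hST fun Q => measurable_pi_apply Q
  have h2 := h.comp (hF.comp (measurable_extendCfg S)) (hG.comp (measurable_extendCfg T))
  have e1 : (F ∘ extendCfg S) ∘ (fun (ω : Config d) (i : S) => ω i) = F := by
    funext ω
    refine hFS _ _ fun Q hQ => ?_
    simp [extendCfg, hQ]
  have e2 : (G ∘ extendCfg T) ∘ (fun (ω : Config d) (i : T) => ω i) = G := by
    funext ω
    refine hGT _ _ fun Q hQ => ?_
    simp [extendCfg, hQ]
  rwa [e1, e2] at h2

lemma integral_prod_of_dep [IsProbabilityMeasure P] {ι : Type*}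
    (hprod : ProbabilityTheory.iIndepFun (m := fun _ : ElemCube d => inferInstance)
      (fun (Q : ElemCube d) (ω : Config d) => ω Q) P)
    {S : ι → Finset (ElemCube d)} (hS : ∀ i j, i ≠ j → Disjoint (S i) (S j))
    {F : ι → Config d → ℂ} (hF : ∀ i, Measurable (F i))
    (hFS : ∀ i ω ω', (∀ Q ∈ S i, ω Q = ω' Q) → F i ω = F i ω') (A : Finset ι) :
    ∫ ω, ∏ i ∈ A, F i ω ∂P = ∏ i ∈ A, ∫ ω, F i ω ∂P := by
  classical
  induction A using Finset.induction_on with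
  | empty => simp
  | insert i A hi ih =>
    simp_rw [Finset.prod_insert hi]
    have hm : Measurable fun ω => ∏ j ∈ A, F j ω := by
      exact Finset.measurable_fun_prod A fun j _ => hF j
    have hind : ProbabilityTheory.IndepFun (F i) (fun ω => ∏ j ∈ A, F j ω) P := by
      refine indepFun_of_dep hprod (S := S i) (T := A.biUnion S) ?_ (hF i) hm (hFS i) ?_
      · rw [Finset.disjoint_biUnion_right]
        intro j hj
        exact hS i j fun e => hi (e ▸ hj)
      · intro ω ω' h
        refine Finset.prod_congr rfl fun j hj => hFS j ω ω' fun Q hQ => h Q ?_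
        exact Finset.mem_biUnion.2 ⟨j, hj, hQ⟩
    rw [hind.integral_fun_mul_eq_mul_integral (hF i).aestronglyMeasurable
      hm.aestronglyMeasurable, ih]

end Approx



/-! ### Part 7: the central limit theorem for blocks and conclusion -/

section BlockCLT

variable {d : ℕ} {P : Measure (Config d)}

/-- Centred block variable. -/
def YY (P : Measure (Config d)) (g : Finset (ElemCube d) → ℝ) (m : ℕ) (z : Fin d → ℤ)
    (ω : Config d) : ℝ :=
  FF g (box (blk m z) m) ω - ∫ ω', FF g (box 0 m) ω' ∂P

/-- Centred reference block variable. -/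
def Y0 (P : Measure (Config d)) (g : Finset (ElemCube d) → ℝ) (m : ℕ) (ω : Config d) : ℝ :=
  FF g (box 0 m) ω - ∫ ω', FF g (box 0 m) ω' ∂P

lemma BM_Y0 (g : Finset (ElemCube d) → ℝ) (m : ℕ) : BM (Y0 P g m) :=
  (BM_FF g _).sub (BM.const _)

lemma BM_YY (g : Finset (ElemCube d) → ℝ) (m : ℕ) (z : Fin d → ℤ) : BM (YY P g m z) :=
  (BM_FF g _).sub (BM.const _)

lemma YY_eq {g : Finset (ElemCube d) → ℝ} (hg : ∀ x S, g (S.image (translateCube x)) = g S)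
    (m : ℕ) (z : Fin d → ℤ) (ω : Config d) :
    YY P g m z ω = Y0 P g m (configShift (-blk m z) ω) := by
  have := FF_translate hg (blk m z) 0 m ω
  rw [add_zero] at this
  rw [YY, Y0, this]

lemma YY_dep (g : Finset (ElemCube d) → ℝ) (m : ℕ) (z : Fin d → ℤ) (ω ω' : Config d)
    (h : ∀ Q ∈ dom (blk m z) m, ω Q = ω' Q) : YY P g m z ω = YY P g m z ω' := by
  rw [YY, YY, FF_box_congr h]

lemma dom_disjoint (m : ℕ) (z z' : Fin d → ℤ) (h : z ≠ z') :
    Disjoint (dom (blk m z) m) (dom (blk m z') m) :=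
  Finset.disjoint_left.2 fun _ h1 h2 => h (dom_blk_unique h1 h2)

lemma integral_Y0 [IsProbabilityMeasure P] (g : Finset (ElemCube d) → ℝ) (m : ℕ) :
    ∫ ω, Y0 P g m ω ∂P = 0 := by
  unfold Y0
  rw [integral_sub ((BM_FF g _).integrable P) (integrable_const _)]
  simp

lemma integral_YY [IsProbabilityMeasure P] (hstat : Stationary P) {g : Finset (ElemCube d) → ℝ}
    (hg : ∀ x S, g (S.image (translateCube x)) = g S) (m : ℕ) (z : Fin d → ℤ) :
    ∫ ω, YY P g m z ω ∂P = 0 := by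
  simp_rw [YY_eq hg]
  rw [integral_shift hstat (BM_Y0 g m), integral_Y0]

lemma integral_YY_sq (hstat : Stationary P) {g : Finset (ElemCube d) → ℝ}
    (hg : ∀ x S, g (S.image (translateCube x)) = g S) (m : ℕ) (z : Fin d → ℤ) :
    ∫ ω, YY P g m z ω ^ 2 ∂P = ∫ ω, Y0 P g m ω ^ 2 ∂P := by
  simp_rw [YY_eq hg]
  exact integral_shift hstat (BM_Y0 g m).sq _

lemma cf_YY (hstat : Stationary P) {g : Finset (ElemCube d) → ℝ}
    (hg : ∀ x S, g (S.image (translateCube x)) = g S) (m : ℕ) (z : Fin d → ℤ) (u : ℝ) :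
    cf P (YY P g m z) u = cf P (Y0 P g m) u := by
  unfold cf
  simp_rw [YY_eq hg]
  have h := (hstat.measurePreserving (-blk m z))
  have hm : Measurable (fun ω => Complex.exp ((u : ℂ) * (Y0 P g m ω : ℂ) * Complex.I)) := by
    have := (BM_Y0 (P := P) g m).meas
    fun_prop
  have h3 := integral_map (μ := P) h.measurable.aemeasurable
    (f := fun ω => Complex.exp ((u : ℂ) * (Y0 P g m ω : ℂ) * Complex.I)) hm.aestronglyMeasurable
  rw [h.map_eq] at h3
  exact h3.symm

lemma integral_sum_sq [IsProbabilityMeasure P] (hstat : Stationary P)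
    (hprod : ProbabilityTheory.iIndepFun (m := fun _ : ElemCube d => inferInstance)
      (fun (Q : ElemCube d) (ω : Config d) => ω Q) P) {g : Finset (ElemCube d) → ℝ}
    (hg : ∀ x S, g (S.image (translateCube x)) = g S) (m : ℕ) (A : Finset (Fin d → ℤ)) :
    ∫ ω, (∑ z ∈ A, YY P g m z ω) ^ 2 ∂P = A.card * ∫ ω, Y0 P g m ω ^ 2 ∂P := by
  classical
  induction A using Finset.induction_on with
  | empty => simp
  | insert z A hz ih =>
    have hS : BM (fun ω => ∑ z ∈ A, YY P g m z ω) := BM.sum _ fun z _ => BM_YY g m z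
    have hY := BM_YY (P := P) g m z
    have hind : ProbabilityTheory.IndepFun (YY P g m z) (fun ω => ∑ z ∈ A, YY P g m z ω) P := by
      refine indepFun_of_dep hprod (S := dom (blk m z) m)
        (T := A.biUnion fun z => dom (blk m z) m) ?_ hY.meas hS.meas (YY_dep g m z) ?_
      · rw [Finset.disjoint_biUnion_right]
        intro j hj
        exact dom_disjoint m z j fun e => hz (e ▸ hj)
      · intro ω ω' h
        refine Finset.sum_congr rfl fun j hj => YY_dep g m j ω ω' fun Q hQ => h Q ?_
        exact Finset.mem_biUnion.2 ⟨j, hj, hQ⟩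
    have h0 : ∫ ω, YY P g m z ω * ∑ z ∈ A, YY P g m z ω ∂P = 0 := by
      rw [hind.integral_fun_mul_eq_mul_integral hY.meas.aestronglyMeasurable
        hS.meas.aestronglyMeasurable, integral_YY hstat hg, zero_mul]
    simp_rw [Finset.sum_insert hz]
    have e : ∀ ω, (YY P g m z ω + ∑ z ∈ A, YY P g m z ω) ^ 2 = YY P g m z ω ^ 2 +
        2 * (YY P g m z ω * ∑ z ∈ A, YY P g m z ω) + (∑ z ∈ A, YY P g m z ω) ^ 2 :=
      fun ω => by ring
    simp_rw [e]
    rw [integral_add ((hY.sq.add ((BM.const _).mul (hY.mul hS))).integrable P)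
      (hS.sq.integrable P), integral_add (hY.sq.integrable P)
      (((BM.const _).mul (hY.mul hS)).integrable P), integral_const_mul, h0, ih,
      integral_YY_sq hstat hg, Finset.card_insert_of_notMem hz]
    push_cast
    ring

lemma cf_sum [IsProbabilityMeasure P] (hstat : Stationary P)
    (hprod : ProbabilityTheory.iIndepFun (m := fun _ : ElemCube d => inferInstance)
      (fun (Q : ElemCube d) (ω : Config d) => ω Q) P) {g : Finset (ElemCube d) → ℝ}
    (hg : ∀ x S, g (S.image (translateCube x)) = g S) (m : ℕ) (A : Finset (Fin d → ℤ)) (a u : ℝ) :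
    cf P (fun ω => a * ∑ z ∈ A, YY P g m z ω) u = cf P (Y0 P g m) (a * u) ^ A.card := by
  have h := integral_prod_of_dep (P := P) hprod (S := fun z => dom (blk m z) m) (dom_disjoint m)
    (F := fun z ω => Complex.exp (((a * u : ℝ) : ℂ) * YY P g m z ω * Complex.I))
    (fun z => by have := (BM_YY (P := P) g m z).meas; fun_prop)
    (fun z ω ω' h => by rw [YY_dep g m z ω ω' h]) A
  have e : ∀ z, ∫ ω, Complex.exp (((a * u : ℝ) : ℂ) * YY P g m z ω * Complex.I) ∂P =
      cf P (Y0 P g m) (a * u) := fun z => cf_YY hstat hg m z (a * u)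
  simp_rw [e, Finset.prod_const] at h
  rw [← h]
  unfold cf
  congr 1
  funext ω
  rw [← Complex.exp_sum]
  congr 1
  push_cast
  rw [Finset.mul_sum, Finset.mul_sum, Finset.sum_mul]
  refine Finset.sum_congr rfl fun z _ => ?_
  ring

lemma cf_eq_charFun [IsProbabilityMeasure P] {F : Config d → ℝ} (hF : BM F) (u : ℝ) :
    cf P F u = charFun (P.map F) u := by
  rw [charFun_apply_real, integral_map hF.meas.aemeasurable]
  · rfl
  · refine Measurable.aestronglyMeasurable ?_
    fun_prop

/-- Number of blocks. -/
def NN (d n m : ℕ) : ℕ := (2 * kk n m + 1) ^ d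

lemma tendsto_NN (hd : 0 < d) (m : ℕ) : Tendsto (fun n => NN d n m) atTop atTop := by
  have h1 : Tendsto (fun n => kk n m) atTop atTop :=
    (Nat.tendsto_div_const_atTop (by omega)).comp (tendsto_sub_atTop_nat m)
  have h2 : Tendsto (fun n => 2 * kk n m + 1) atTop atTop :=
    tendsto_atTop_mono (fun n => by omega) h1
  exact (tendsto_pow_atTop hd.ne').comp h2

/-- Normalised block sums. -/
def TT (P : Measure (Config d)) (g : Finset (ElemCube d) → ℝ) (m n : ℕ) (ω : Config d) : ℝ :=
  (√(NN d n m : ℝ) * √((2 * (m : ℝ) + 2) ^ d))⁻¹ * ∑ z ∈ Zs d (kk n m), YY P g m z ω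

/-- Block standard deviation. -/
def sg (P : Measure (Config d)) (g : Finset (ElemCube d) → ℝ) (m : ℕ) : ℝ :=
  nrm P (Y0 P g m) / √((2 * (m : ℝ) + 2) ^ d)

lemma BM_sumYY (g : Finset (ElemCube d) → ℝ) (m n : ℕ) :
    BM (fun ω => ∑ z ∈ Zs d (kk n m), YY P g m z ω) := BM.sum _ fun z _ => BM_YY g m z

lemma BM_TT (g : Finset (ElemCube d) → ℝ) (m n : ℕ) : BM (TT P g m n) :=
  (BM.const _).mul (BM_sumYY g m n)

lemma NN_pos (n m : ℕ) : (0 : ℝ) < NN d n m := by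
  unfold NN; positivity

lemma nrm_TT [IsProbabilityMeasure P] (hstat : Stationary P)
    (hprod : ProbabilityTheory.iIndepFun (m := fun _ : ElemCube d => inferInstance)
      (fun (Q : ElemCube d) (ω : Config d) => ω Q) P) {g : Finset (ElemCube d) → ℝ}
    (hg : ∀ x S, g (S.image (translateCube x)) = g S) (m n : ℕ) :
    nrm P (TT P g m n) = sg P g m := by
  have h1 : nrm P (fun ω => ∑ z ∈ Zs d (kk n m), YY P g m z ω) =
      √(NN d n m : ℝ) * nrm P (Y0 P g m) := by
    unfold nrm
    rw [integral_sum_sq hstat hprod hg, card_Zs, Real.sqrt_mul (by positivity)]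
    rfl
  unfold TT
  rw [nrm_const_mul, h1, sg, abs_of_nonneg (by positivity)]
  have := Real.sqrt_pos.2 (NN_pos (d := d) n m)
  have : (0 : ℝ) < √((2 * (m : ℝ) + 2) ^ d) := by positivity
  field_simp

lemma tendsto_cf_TT [IsProbabilityMeasure P] (hd : 0 < d) (hstat : Stationary P)
    (hprod : ProbabilityTheory.iIndepFun (m := fun _ : ElemCube d => inferInstance)
      (fun (Q : ElemCube d) (ω : Config d) => ω Q) P) {g : Finset (ElemCube d) → ℝ}
    (hg : ∀ x S, g (S.image (translateCube x)) = g S) (m : ℕ) (u : ℝ) :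
    Tendsto (fun n => cf P (TT P g m n) u) atTop
      (𝓝 (Complex.exp (((-(sg P g m ^ 2 * u ^ 2 / 2) : ℝ) : ℂ)))) := by
  rcases (nrm_nonneg (P := P) (Y0 P g m)).eq_or_lt with h0 | h0
  · have hs : sg P g m = 0 := by rw [sg, ← h0, zero_div]
    rw [hs]
    refine tendsto_const_nhds.congr fun n => ?_
    have h1 := norm_cf_sub_le (P := P) (BM_TT (P := P) g m n) (BM.const 0) u
    simp only [sub_zero] at h1
    have h2 : nrm P (fun ω => TT P g m n ω) = 0 := (nrm_TT hstat hprod hg m n).trans hs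
    rw [h2, mul_zero] at h1
    have h3 := sub_eq_zero.1 (norm_eq_zero.1 (le_antisymm h1 (norm_nonneg _)))
    rw [h3]
    simp [cf]
  · set s0 := nrm P (Y0 P g m) with hs0
    set t : ℝ := u * s0 / √((2 * (m : ℝ) + 2) ^ d) with ht
    have hW : BM (fun ω => s0⁻¹ * Y0 P g m ω) := (BM.const _).mul (BM_Y0 g m)
    have h := ProbabilityTheory.tendsto_charFun_inv_sqrt_mul_pow (P := P)
      (X := fun ω => s0⁻¹ * Y0 P g m ω) hW.meas.aemeasurable
      (by rw [integral_const_mul, integral_Y0, mul_zero])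
      (by
        simp only [Pi.pow_apply, mul_pow]
        rw [integral_const_mul, ← nrm_sq, ← hs0]
        field_simp) t
    have h2 := h.comp (tendsto_NN hd m)
    have e : Complex.exp (((-(sg P g m ^ 2 * u ^ 2 / 2) : ℝ) : ℂ)) =
        Complex.exp (-(t : ℂ) ^ 2 / 2) := by
      congr 1
      rw [sg, ← hs0, ht]
      push_cast
      ring
    rw [e]
    refine h2.congr fun n => ?_
    simp only [Function.comp]
    unfold TT
    rw [cf_sum hstat hprod hg, card_Zs, ← cf_eq_charFun hW]
    change _ ^ NN d n m = _ ^ NN d n m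
    congr 1
    unfold cf
    congr 1
    funext ω
    congr 2
    rw [ht]
    norm_cast
    have := Real.sqrt_pos.2 (NN_pos (d := d) n m)
    have : (0 : ℝ) < √((2 * (m : ℝ) + 2) ^ d) := by positivity
    field_simp

lemma tendsto_ratio (d m : ℕ) : Tendsto (fun n : ℕ => (√((2 * (n : ℝ)) ^ d))⁻¹ *
    (√(NN d n m : ℝ) * √((2 * (m : ℝ) + 2) ^ d))) atTop (𝓝 1) := by
  have h := ((tendsto_kk m).pow d).sqrt
  rw [one_pow, Real.sqrt_one] at h
  refine h.congr fun n => ?_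
  rw [mul_pow, mul_pow, Real.sqrt_mul (by positivity), Real.sqrt_mul (by positivity), inv_pow,
    Real.sqrt_inv, NN]
  push_cast
  ring

/-- Normalised functional. -/
def ZZ (P : Measure (Config d)) (g : Finset (ElemCube d) → ℝ) (n : ℕ) (ω : Config d) : ℝ :=
  (√((2 * (n : ℝ)) ^ d))⁻¹ * (FF g (box 0 n) ω - ∫ ω', FF g (box 0 n) ω' ∂P)

lemma BM_ZZ (g : Finset (ElemCube d) → ℝ) (n : ℕ) : BM (ZZ P g n) :=
  (BM.const _).mul ((BM_FF g _).sub (BM.const _))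

lemma approx_ZZ [IsProbabilityMeasure P] (hstat : Stationary P)
    (hprod : ProbabilityTheory.iIndepFun (m := fun _ : ElemCube d => inferInstance)
      (fun (Q : ElemCube d) (ω : Config d) => ω Q) P) {g : Finset (ElemCube d) → ℝ}
    (hg : ∀ x S, g (S.image (translateCube x)) = g S) (hap : BlockApprox P g) (ε : ℝ) (hε : 0 < ε) :
    ∃ m, ∀ᶠ n in atTop, nrm P (fun ω => ZZ P g n ω - TT P g m n ω) ≤ ε := by
  obtain ⟨m, hm⟩ := hap ((ε / 2) ^ 2) (by positivity)
  refine ⟨m, ?_⟩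
  have hr : Tendsto (fun n : ℕ => |(√((2 * (n : ℝ)) ^ d))⁻¹ *
      (√(NN d n m : ℝ) * √((2 * (m : ℝ) + 2) ^ d)) - 1| * sg P g m) atTop (𝓝 0) := by
    simpa using ((tendsto_ratio d m).sub_const 1).abs.mul_const (sg P g m)
  filter_upwards [hm m le_rfl, hr.eventually_lt_const (show (0 : ℝ) < ε / 2 by positivity),
    eventually_gt_atTop 0] with n h1 h2 hn
  have hn' : (0 : ℝ) < n := by exact_mod_cast hn
  rw [var_eq (BM_DD g n m)] at h1
  have hc : (0 : ℝ) < √((2 * (n : ℝ)) ^ d) := by positivity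
  set c := (√((2 * (n : ℝ)) ^ d))⁻¹ with hcdef
  set b := √(NN d n m : ℝ) * √((2 * (m : ℝ) + 2) ^ d) with hbdef
  have hb : 0 < b := by
    have := Real.sqrt_pos.2 (NN_pos (d := d) n m)
    positivity
  have hDD : BM (fun ω => DD g n m ω - ∫ ω', DD g n m ω' ∂P) := (BM_DD g n m).sub (BM.const _)
  -- decomposition
  have hdec : ∀ ω, FF g (box 0 n) ω - ∫ ω', FF g (box 0 n) ω' ∂P =
      (DD g n m ω - ∫ ω', DD g n m ω' ∂P) + ∑ z ∈ Zs d (kk n m), YY P g m z ω := by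
    have e : ∀ ω, FF g (box 0 n) ω = DD g n m ω + (∑ z ∈ Zs d (kk n m), YY P g m z ω +
        (Zs d (kk n m)).card * ∫ ω', FF g (box 0 m) ω' ∂P) := by
      intro ω
      simp only [DD, YY, Finset.sum_sub_distrib, Finset.sum_const, nsmul_eq_mul]
      ring
    have e2 : ∫ ω', FF g (box 0 n) ω' ∂P = ∫ ω', DD g n m ω' ∂P +
        (Zs d (kk n m)).card * ∫ ω', FF g (box 0 m) ω' ∂P := by
      simp_rw [e]
      rw [integral_add ((BM_DD g n m).integrable P)
        (((BM_sumYY g m n).add (BM.const _)).integrable P),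
        integral_add ((BM_sumYY g m n).integrable P) (integrable_const _),
        integral_finsetSum _ fun z _ => (BM_YY g m z).integrable P,
        Finset.sum_eq_zero fun z _ => integral_YY hstat hg m z]
      simp
    intro ω
    rw [e2, e ω]
    ring
  have heq : (fun ω => ZZ P g n ω - TT P g m n ω) = fun ω =>
      c * (DD g n m ω - ∫ ω', DD g n m ω' ∂P) + (c * b - 1) * TT P g m n ω := by
    funext ω
    simp only [ZZ, TT]
    rw [hdec, ← hcdef, ← hbdef]
    field_simp
    ring
  rw [heq]
  refine (nrm_add_le ((BM.const _).mul hDD) ((BM.const _).mul (BM_TT g m n))).trans ?_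
  rw [nrm_const_mul, nrm_const_mul, nrm_TT hstat hprod hg]
  have h3 : nrm P (fun ω => DD g n m ω - ∫ ω', DD g n m ω' ∂P) ≤ ε / 2 * √((2 * (n : ℝ)) ^ d) := by
    unfold nrm
    refine (Real.sqrt_le_sqrt h1).trans ?_
    rw [Real.sqrt_mul (by positivity), Real.sqrt_sq (by positivity)]
  have h4 : |c| * nrm P (fun ω => DD g n m ω - ∫ ω', DD g n m ω' ∂P) ≤ ε / 2 := by
    rw [abs_of_pos (by positivity)]
    calc _ ≤ c * (ε / 2 * √((2 * (n : ℝ)) ^ d)) := by gcongr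
      _ = ε / 2 := by rw [hcdef]; field_simp
  linarith

theorem main_clt [IsProbabilityMeasure P] (hd : 0 < d) (hstat : Stationary P)
    (hprod : ProbabilityTheory.iIndepFun (m := fun _ : ElemCube d => inferInstance)
      (fun (Q : ElemCube d) (ω : Config d) => ω Q) P) {g : Finset (ElemCube d) → ℝ}
    (hg : ∀ x S, g (S.image (translateCube x)) = g S) (hap : BlockApprox P g) :
    ∃ τ2 : NNReal,
      Tendsto (fun n : ℕ => ((2 * (n : ℝ)) ^ d)⁻¹ *
          ∫ ω, (FF g (box 0 n) ω - ∫ ω', FF g (box 0 n) ω' ∂P) ^ 2 ∂P) atTop (𝓝 (τ2 : ℝ))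
        ∧ ∀ f : BoundedContinuousFunction ℝ ℝ,
          Tendsto (fun n : ℕ => ∫ ω, f (ZZ P g n ω) ∂P)
            atTop (𝓝 (∫ z, f z ∂(ProbabilityTheory.gaussianReal 0 τ2))) := by
  obtain ⟨τ, hτ0, h1, h2⟩ := approx_limit (P := P) (BM_ZZ (P := P) g) (BM_TT (P := P) g)
    (fun m => div_nonneg (nrm_nonneg _) (Real.sqrt_nonneg _) : ∀ m, 0 ≤ sg P g m)
    (approx_ZZ hstat hprod hg hap) (nrm_TT hstat hprod hg) (tendsto_cf_TT hd hstat hprod hg)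
  obtain ⟨v, hv⟩ : ∃ v : NNReal, (v : ℝ) = τ ^ 2 :=
    ⟨Real.toNNReal (τ ^ 2), Real.coe_toNNReal _ (sq_nonneg τ)⟩
  refine ⟨v, ?_, ?_⟩
  · rw [hv]
    refine (h1.pow 2).congr fun n => ?_
    rw [nrm_sq]
    simp only [ZZ, mul_pow]
    rw [integral_const_mul, inv_pow, Real.sq_sqrt (by positivity)]
  · have hprob : ∀ n, IsProbabilityMeasure (P.map (ZZ P g n)) := fun n =>
      Measure.isProbabilityMeasure_map (BM_ZZ g n).meas.aemeasurable
    let ν : ℕ → ProbabilityMeasure ℝ := fun n => ⟨P.map (ZZ P g n), hprob n⟩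
    let ν0 : ProbabilityMeasure ℝ :=
      ⟨ProbabilityTheory.gaussianReal 0 v, inferInstance⟩
    have hlim : Tendsto ν atTop (𝓝 ν0) := by
      rw [ProbabilityMeasure.tendsto_iff_tendsto_charFun]
      intro u
      have e : charFun (ν0 : Measure ℝ) u = Complex.exp (((-(τ ^ 2 * u ^ 2 / 2) : ℝ) : ℂ)) := by
        change charFun (ProbabilityTheory.gaussianReal 0 v) u = _
        rw [ProbabilityTheory.charFun_gaussianReal]
        have hv' : ((v : ℝ) : ℂ) = (τ : ℂ) ^ 2 := by rw [hv]; push_cast; rfl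
        rw [hv']
        congr 1
        push_cast
        ring
      rw [e]
      exact (h2 u).congr fun n => cf_eq_charFun (BM_ZZ g n) u
    rw [ProbabilityMeasure.tendsto_iff_forall_integral_tendsto] at hlim
    intro f
    refine (hlim f).congr fun n => ?_
    change ∫ x, f x ∂(P.map (ZZ P g n)) = _
    rw [integral_map (BM_ZZ g n).meas.aemeasurable f.continuous.measurable.aestronglyMeasurable]

end BlockCLT


/-- **CLT for lifetime sums.** Fix `0 ≤ q < d` and let `P` be a stationary
product probability measure on `Ω = [0,1]^{K^d}` (the coordinates `(ω_Q)_{Q ∈ K^d}` are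
independent under `P`). Then there is a constant `τ² ≥ 0` (depending on `d`, `q`) such that,
as `n → ∞`, (i) `|Λ_n|⁻¹ E[(L_q^n - E[L_q^n])²] → τ²`, and
(ii) `|Λ_n|^{-1/2} (L_q^n - E[L_q^n])` converges in distribution to `N(0, τ²)`
(tested against bounded continuous functions). -/
theorem clt_lifetime_sum (d q : ℕ) (hq : q < d)
    (P : Measure (Config d)) [IsProbabilityMeasure P]
    (hstat : Stationary P)
    (hprod : ProbabilityTheory.iIndepFun (m := fun _ : ElemCube d => inferInstance)
      (fun (Q : ElemCube d) (ω : Config d) => ω Q) P) :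
    ∃ τ2 : NNReal,
      Tendsto
          (fun n : ℕ => ((2 * (n : ℝ)) ^ d)⁻¹ *
            ∫ ω, (lifetimeSum d q n ω - ∫ ω', lifetimeSum d q n ω' ∂P) ^ 2 ∂P)
          atTop (𝓝 (τ2 : ℝ))
        ∧ ∀ g : BoundedContinuousFunction ℝ ℝ,
            Tendsto
              (fun n : ℕ => ∫ ω, g ((Real.sqrt ((2 * (n : ℝ)) ^ d))⁻¹ *
                (lifetimeSum d q n ω - ∫ ω', lifetimeSum d q n ω' ∂P)) ∂P)
              atTop (𝓝 (∫ z, g z ∂(ProbabilityTheory.gaussianReal 0 τ2))) := by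
  simp only [lifetimeSum_eq]
  exact main_clt (by omega) hstat hprod (gBetti_trans q) (gBetti_blockApprox q hstat hprod)

end
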